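/- arXiv:1307.5408 — 3 statements merged into one kernel-verified Lean document; each statement's English description precedes it below -/
import Mathlib

section
/- Let K be an algebraically closed field of characteristic 0 and let V ⊆ (Kˣ)ⁿ be a free irreducible variety. Then there exist a Kummer generic irreducible variety V' ⊆ (Kˣ)ⁿ and a correspondence torus T ⊆ (Kˣ)ⁿ × (Kˣ)ⁿ such that T induces a toric correspondence between V' and V. In fact, there is N ≥ 1 such that one can take V' to be any irreducible component of √[N]{V} and T = {(x, y) ∈ (Kˣ)ⁿ × (Kˣ)ⁿ : yᵢ = xᵢ^N for all i}. -/
namespace BadFields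

variable (K : Type) [Field K]

/-- The divisible hull `⟨A⟩` of a subset `A ⊆ Kˣ`: all `x` with `x ^ k` in the subgroup
generated by `A` for some `k ≥ 1`.  Note that `⟨∅⟩` is exactly the group of roots of unity. -/
def divHull (A : Set Kˣ) : Subgroup Kˣ where
  carrier := {x | ∃ k : ℕ, k ≠ 0 ∧ x ^ k ∈ Subgroup.closure A}
  one_mem' := ⟨1, one_ne_zero, by simpa using Subgroup.one_mem _⟩
  mul_mem' := by
    rintro x y ⟨k, hk, hx⟩ ⟨l, hl, hy⟩
    refine ⟨k * l, mul_ne_zero hk hl, ?_⟩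
    rw [mul_pow]
    exact Subgroup.mul_mem _ (by rw [pow_mul]; exact Subgroup.pow_mem _ hx l)
      (by rw [mul_comm k l, pow_mul]; exact Subgroup.pow_mem _ hy k)
  inv_mem' := by
    rintro x ⟨k, hk, hx⟩
    exact ⟨k, hk, by rw [inv_pow]; exact Subgroup.inv_mem _ hx⟩

/-- A subgroup `U` of `Kˣ` is divisible if every element has `k`-th roots in `U` for all
`k ≥ 1`. -/
def DivisibleSub (U : Subgroup Kˣ) : Prop :=
  ∀ u ∈ U, ∀ k : ℕ, k ≠ 0 → ∃ v ∈ U, v ^ k = u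

/-- The lattice of multiplicative relations of the tuple `y` modulo the divisible hull of `A`.
Since `Kˣ/⟨A⟩` is torsion-free, this lattice is saturated, and the dimension of the
`ℚ`-subspace of `Kˣ/Tor` spanned by (the images of) `y` over (the image of) `A` equals
`n` minus the rank of this lattice. -/
def relLattice (A : Set Kˣ) {n : ℕ} (y : Fin n → Kˣ) : Submodule ℤ (Fin n → ℤ) where
  carrier := {c | (∏ i, y i ^ c i) ∈ divHull K A}
  zero_mem' := by simpa using Subgroup.one_mem _
  add_mem' := by
    intro c d hc hd
    have h : (∏ i, y i ^ (c + d) i) = (∏ i, y i ^ c i) * ∏ i, y i ^ d i := by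
      rw [← Finset.prod_mul_distrib]
      exact Finset.prod_congr rfl fun i _ => by rw [Pi.add_apply, zpow_add]
    show (∏ i, y i ^ (c + d) i) ∈ divHull K A
    rw [h]
    exact Subgroup.mul_mem _ hc hd
  smul_mem' := by
    intro m c hc
    have h : (∏ i, y i ^ (m • c) i) = (∏ i, y i ^ c i) ^ m := by
      rw [← Finset.prod_zpow]
      exact Finset.prod_congr rfl fun i _ => by
        rw [Pi.smul_apply, smul_eq_mul, mul_comm, zpow_mul]
    show (∏ i, y i ^ (m • c) i) ∈ divHull K A
    rw [h]
    exact Subgroup.zpow_mem _ hc m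

/-- `ldimRel K A y` is the linear dimension `ldim(y/A)`: the dimension of the `ℚ`-subspace
spanned by the images of the coordinates of `y` in `Kˣ/Tor` over the subspace spanned by the
image of `A`. -/
noncomputable def ldimRel (A : Set Kˣ) {n : ℕ} (y : Fin n → Kˣ) : ℕ :=
  n - Module.finrank ℤ (relLattice K A y)

/-- The (absolute) linear dimension `ldim(y)`. -/
noncomputable def ldim {n : ℕ} (y : Fin n → Kˣ) : ℕ := ldimRel K ∅ y

/-- `trdegOver K F s` : the transcendence degree over the subfield `F` of the field generated
by `F` and the set `s`, i.e. the maximal cardinality of a finite subset of `s` which is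
algebraically independent over `F`. -/
noncomputable def trdegOver (F : Subfield K) (s : Set K) : ℕ :=
  sSup {d | ∃ t : Finset K, ↑t ⊆ s ∧ t.card = d ∧
    AlgebraicIndependent F (fun x : {y : K // y ∈ t} => (x : K))}

/-- Transcendence degree over the prime field; in characteristic zero this is
`trdeg(ℚ(s)/ℚ)`. -/
noncomputable def trdegQ (s : Set K) : ℕ := trdegOver K ⊥ s

section Var

variable {ι : Type} [Fintype ι]

/-- The subset of the torus `(Kˣ)^ι` cut out by a set of polynomials. -/
def zeroSet (S : Set (MvPolynomial ι K)) : Set (ι → Kˣ) :=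
  {x | ∀ p ∈ S, MvPolynomial.eval (fun i => (x i : K)) p = 0}

/-- Zariski closed subsets of the torus `(Kˣ)^ι` (closed subvarieties). -/
def IsZClosed (V : Set (ι → Kˣ)) : Prop := ∃ S, V = zeroSet K S

/-- Zariski closed subsets of `(Kˣ)^ι` defined by polynomials all of whose coefficients lie
in `E`; for `E = ↑(⊥ : Subfield K)` (the prime field, i.e. `ℚ` in characteristic `0`) this
means defined over `ℚ`. -/
def IsClosedOver (E : Set K) (V : Set (ι → Kˣ)) : Prop :=
  ∃ S : Set (MvPolynomial ι K),
    (∀ p ∈ S, ∀ m, MvPolynomial.coeff m p ∈ E) ∧ V = zeroSet K S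

/-- Irreducible (nonempty) Zariski closed subsets of the torus `(Kˣ)^ι`. -/
def IsIrredVar (V : Set (ι → Kˣ)) : Prop :=
  IsZClosed K V ∧ V.Nonempty ∧
    ∀ C₁ C₂ : Set (ι → Kˣ), IsZClosed K C₁ → IsZClosed K C₂ →
      V ⊆ C₁ ∪ C₂ → V ⊆ C₁ ∨ V ⊆ C₂

/-- The Zariski closure in `(Kˣ)^ι`. -/
def zcl (S : Set (ι → Kˣ)) : Set (ι → Kˣ) := ⋂₀ {C | IsZClosed K C ∧ S ⊆ C}

/-- The locus of a point `b` over the set of constants `E`: the smallest Zariski closed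
set containing `b` defined by polynomials with coefficients in `E`. -/
def locusOver (E : Set K) (b : ι → Kˣ) : Set (ι → Kˣ) :=
  ⋂₀ {C | IsClosedOver K E C ∧ b ∈ C}

/-- The dimension of a (not necessarily irreducible) Zariski closed subset of `(Kˣ)^ι`:
the supremum of the lengths of strict chains of irreducible closed subsets. -/
noncomputable def vdim (V : Set (ι → Kˣ)) : ℕ :=
  sSup {d | ∃ W : Fin (d + 1) → Set (ι → Kˣ),
    (∀ i, IsIrredVar K (W i) ∧ W i ⊆ V) ∧ StrictMono W}

/-- The monomial map `y ↦ y^M` attached to an integer matrix `M`. -/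
def mpow {k : ℕ} (M : Matrix (Fin k) ι ℤ) (y : ι → Kˣ) : Fin k → Kˣ :=
  fun j => ∏ i, y i ^ M j i

/-- Algebraic subgroups of the torus `(Kˣ)^ι`: subgroups defined by finitely many monomial
equations `y^M = 1`. -/
def IsAlgSubgroup (H : Set (ι → Kˣ)) : Prop :=
  ∃ (k : ℕ) (M : Matrix (Fin k) ι ℤ), H = {y | mpow K M y = 1}

/-- Subtori of `(Kˣ)^ι`: irreducible algebraic subgroups. -/
def IsSubtorus (T : Set (ι → Kˣ)) : Prop := IsAlgSubgroup K T ∧ IsIrredVar K T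

/-- The coset `c · T` (multiplication coordinatewise). -/
def coset (c : ι → Kˣ) (T : Set (ι → Kˣ)) : Set (ι → Kˣ) := (fun t => c * t) '' T

/-- A variety is free if it is not contained in a coset of a proper subtorus. -/
def IsFree (V : Set (ι → Kˣ)) : Prop :=
  ¬ ∃ T c, IsSubtorus K T ∧ T ≠ Set.univ ∧ V ⊆ coset K c T

/-- `T` is the minimal torus of `V`: the smallest subtorus such that `V` is contained in some
coset of it. -/
def IsMinTorus (V T : Set (ι → Kˣ)) : Prop :=
  IsSubtorus K T ∧ (∃ c, V ⊆ coset K c T) ∧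
    ∀ T', IsSubtorus K T' → (∃ c, V ⊆ coset K c T') → T ⊆ T'

/-- The codimension `cd(V) = dim(minimal torus of V) - dim V`. -/
noncomputable def cd (V : Set (ι → Kˣ)) : ℕ :=
  sInf {d | ∃ T c, IsSubtorus K T ∧ V ⊆ coset K c T ∧ d = vdim K T} - vdim K V

/-- `S` is cd-maximal in `W`. -/
def CdMaximal (S W : Set (ι → Kˣ)) : Prop :=
  IsIrredVar K S ∧ S ⊆ W ∧
    ∀ S', IsIrredVar K S' → S ⊂ S' → S' ⊆ W → cd K S < cd K S'

/-- `√[m]{V}`, the preimage of `V` under coordinatewise `m`-th powers. -/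
def mroot (m : ℕ) (V : Set (ι → Kˣ)) : Set (ι → Kˣ) := {a | (fun i => a i ^ m) ∈ V}

/-- An irreducible variety `V` is Kummer generic if `√[m]{V}` is irreducible for all `m ≥ 1`. -/
def KummerGeneric (V : Set (ι → Kˣ)) : Prop :=
  IsIrredVar K V ∧ ∀ m : ℕ, 1 ≤ m → IsIrredVar K (mroot K m V)

/-- Irreducible components of a set `S`: maximal irreducible closed subsets of `S`. -/
def IsIrredComponent (V' S : Set (ι → Kˣ)) : Prop :=
  IsIrredVar K V' ∧ V' ⊆ S ∧ ∀ W, IsIrredVar K W → V' ⊆ W → W ⊆ S → W = V'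

end Var

/-- A correspondence torus: an `n`-dimensional subtorus of `(Kˣ)ⁿ × (Kˣ)ⁿ` which projects
onto `(Kˣ)ⁿ` in both coordinates.  We identify `(Kˣ)ⁿ × (Kˣ)ⁿ` with `(Kˣ)^(Fin n ⊕ Fin n)`,
a pair `(x, y)` corresponding to `Sum.elim x y`. -/
def IsCorrTorus {n : ℕ} (T : Set ((Fin n ⊕ Fin n) → Kˣ)) : Prop :=
  IsSubtorus K T ∧ vdim K T = n ∧
    (∀ x : Fin n → Kˣ, ∃ y, Sum.elim x y ∈ T) ∧
    (∀ y : Fin n → Kˣ, ∃ x, Sum.elim x y ∈ T)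

/-- `T` induces a toric correspondence between `V` and `V'`: the Zariski closures of the two
projections of `(V × V') ∩ T` are `V` and `V'` respectively. -/
def ToricCorr {n : ℕ} (T : Set ((Fin n ⊕ Fin n) → Kˣ)) (V V' : Set (Fin n → Kˣ)) : Prop :=
  zcl K ((fun p => p ∘ Sum.inl) '' {p | p ∈ T ∧ (p ∘ Sum.inl) ∈ V ∧ (p ∘ Sum.inr) ∈ V'}) = V ∧
  zcl K ((fun p => p ∘ Sum.inr) '' {p | p ∈ T ∧ (p ∘ Sum.inl) ∈ V ∧ (p ∘ Sum.inr) ∈ V'}) = V'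

/-- The set of elements of `K` underlying a set of units. -/
def unitSet (A : Set Kˣ) : Set K := (fun u : Kˣ => (u : K)) '' A

/-- `trdeg(y/A)`, the transcendence degree of `ℚ(A ∪ y)` over `ℚ(A)`. -/
noncomputable def trdegRel (A : Set Kˣ) {n : ℕ} (y : Fin n → Kˣ) : ℕ :=
  trdegOver K (Subfield.closure (unitSet K A)) (Set.range fun i => (y i : K))

/-- The predimension `δ(y/A) = 2 trdeg(y/A) - ldim(y/A)`. -/
noncomputable def pdelta (A : Set Kˣ) {n : ℕ} (y : Fin n → Kˣ) : ℤ :=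
  2 * (trdegRel K A y : ℤ) - (ldimRel K A y : ℤ)

/-- The extension `⟨A ∪ b⟩/A` is minimal prealgebraic of length `n`. -/
def MinPrealg {n : ℕ} (A : Set Kˣ) (b : Fin n → Kˣ) : Prop :=
  2 ≤ n ∧ ldimRel K A b = n ∧ pdelta K A b = 0 ∧
    ∀ B' : Set Kˣ, B' = ↑(divHull K B') → A ⊂ B' → B' ⊂ ↑(divHull K (A ∪ Set.range b)) →
      pdelta K B' b < 0

end BadFields

/-!
Monomials on a free irreducible variety `V` are non-constant, so each is transcendental over `K`
in the function field of `V` and some discrete valuation trivial on `K` is nonzero on it. Finitely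
many such valuations show that the exponents of a monomial which is an `M`-th power in the function
field are divisible by `M`, up to a factor `N` depending only on `V`.

Let `V'` be a component of `√[N]{V}`. The group of `N`-torsion points acts transitively on the
fibres of `x ↦ x ^ N`, so `V'` maps onto `V`. Let `W ⊆ √[m]{V'}` be irreducible with image `V'`
under the `m`-th power map. If an `m`-torsion point `ξ` did not stabilise `W`, then duality for
finite abelian groups would give a monomial `x ^ c` with `ξ ^ c ≠ 1` that is trivial on the
stabiliser of `W` among the `mN`-torsion points. By Galois descent `x ^ c` on `W` is the pullback of
a rational function on `V` along the `mN`-th power map, and the `mN`-th power of that function is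
the monomial `x ^ c` on `V`. Hence `mN` divides `N c`, so `m` divides `c` and `ξ ^ c = 1`, a
contradiction. Thus `W` is stable under all `m`-torsion points, that is, `W = √[m]{V'}`.
-/

open Topology TopologicalSpace Pointwise

namespace BadFields

section DiscreteValuation

theorem exists_submodule_smul_mem_of_dual_eq_zero {R M : Type*} [CommRing R] [IsDomain R]
    [IsPrincipalIdealRing R] [AddCommGroup M] [Module R M] [Module.Finite R M]
    (L : Submodule R M) (hL : ∀ φ : Module.Dual R M, (∀ x ∈ L, φ x = 0) → φ = 0) :
    ∃ N : R, N ≠ 0 ∧ ∀ x, N • x ∈ L := by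
  have torsion_quotient : Module.IsTorsion R (M ⧸ L) := by
    intro q
    rw [← Submodule.mem_torsion_iff, ← Submodule.Quotient.mk_eq_zero,
      ← Module.forall_dual_apply_eq_zero_iff R]
    intro φ
    obtain ⟨x, rfl⟩ := L.mkQ_surjective q
    refine DFunLike.congr_fun (hL (φ ∘ₗ (Submodule.torsion R (M ⧸ L)).mkQ ∘ₗ L.mkQ) ?_) x
    intro y hy
    simp [(Submodule.Quotient.mk_eq_zero L).2 hy]
  obtain ⟨N, hN, hN0⟩ := Submodule.annihilator_top_inter_nonZeroDivisors torsion_quotient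
  refine ⟨N, nonZeroDivisors.ne_zero hN0, fun x ↦ ?_⟩
  rw [← Submodule.Quotient.mk_eq_zero, Submodule.Quotient.mk_smul]
  exact Submodule.mem_annihilator.1 hN _ trivial

theorem exists_forall_dvd_mul_of_sum_smul_eq_smul {R A ι : Type*} [CommRing R] [IsDomain R]
    [IsPrincipalIdealRing R] [AddCommGroup A] [Module R A] [Fintype ι] (y : ι → A)
    (hy : ∀ c : ι → R, c ≠ 0 → ∃ v : Module.Dual R A, v (∑ i, c i • y i) ≠ 0) :
    ∃ N : R, N ≠ 0 ∧ ∀ (M : R) (c : ι → R) (g : A), ∑ i, c i • y i = M • g → ∀ i, M ∣ N * c i := by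
  classical
  let values : Module.Dual R A →ₗ[R] ι → R := LinearMap.pi fun i ↦ Module.Dual.eval R A (y i)
  obtain ⟨N, hN0, hN⟩ := exists_submodule_smul_mem_of_dual_eq_zero values.range fun φ hφ ↦ by
    have hc : (fun i ↦ φ (Pi.single i 1)) = 0 := by
      by_contra hc
      obtain ⟨v, hv⟩ := hy _ hc
      refine hv ?_
      rw [← hφ _ ⟨v, rfl⟩, ← Finset.univ_sum_single (values v), map_sum, map_sum]
      refine Finset.sum_congr rfl fun i _ ↦ ?_
      rw [← mul_one (values v i), ← smul_eq_mul, Pi.single_smul, map_smul, map_smul]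
      exact mul_comm _ _
    exact LinearMap.pi_ext' fun i ↦ LinearMap.ext_ring (congr_fun hc i)
  refine ⟨N, hN0, fun M c g hg i ↦ ?_⟩
  obtain ⟨v, hv⟩ := hN (Pi.single i 1)
  have hvy (j) : v (y j) = N * (Pi.single i 1 : ι → R) j := congr_fun hv j
  refine ⟨v g, ?_⟩
  calc N * c i = v (∑ j, c j • y j) := by simp [hvy, Pi.single_apply, mul_comm]
    _ = M * v g := by rw [hg, map_smul, smul_eq_mul]

theorem exists_monoidHom_int_ne_one_of_dedekind {A L F : Type*} [CommRing A] [IsDedekindDomain A]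
    [Field L] [Algebra A L] [IsFractionRing A L] [CharZero L] [Field F] [Algebra L F] [Algebra A F]
    [IsScalarTower A L F] [FiniteDimensional L F] {a : A} (ha : ¬ IsUnit a) {u : Fˣ}
    (hu : (u : F) = algebraMap A F a) : ∃ v : Fˣ →* Multiplicative ℤ, v u ≠ 1 := by
  have : IsDedekindDomain (integralClosure A F) := integralClosure.isDedekindDomain A L F
  have : IsFractionRing (integralClosure A F) F :=
    integralClosure.isFractionRing_of_finite_extension L F
  have : FaithfulSMul A (integralClosure A F) := by
    have : FaithfulSMul A F := by
      rw [faithfulSMul_iff_algebraMap_injective, IsScalarTower.algebraMap_eq A L F]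
      exact (algebraMap L F).injective.comp (IsFractionRing.injective A L)
    exact FaithfulSMul.tower_bot A (integralClosure A F) F
  obtain ⟨p, hp, hap⟩ := exists_max_ideal_of_mem_nonunits ha
  obtain ⟨Q, hQ, hQp⟩ :=
    Ideal.exists_maximal_ideal_liesOver_of_isIntegral (S := integralClosure A F) p
  have haQ : algebraMap A (integralClosure A F) a ∈ Q := by rwa [hQp.over] at hap
  have hua : (u : F) = algebraMap (integralClosure A F) F (algebraMap A _ a) := by
    rw [hu, ← IsScalarTower.algebraMap_apply]
  have hQ0 : Q ≠ ⊥ := by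
    rintro rfl
    exact u.ne_zero (by rw [hua, Ideal.mem_bot.1 haQ, map_zero])
  let P : IsDedekindDomain.HeightOneSpectrum (integralClosure A F) := ⟨Q, hQ.isPrime, hQ0⟩
  have val_lt_one : P.valuation F (u : F) < 1 := by
    rw [hua]
    exact (P.valuation_lt_one_iff_mem _).2 haQ
  refine ⟨(WithZero.unitsWithZeroEquiv (α := Multiplicative ℤ)).toMonoidHom.comp
    (Units.map (P.valuation F).toMonoidWithZeroHom.toMonoidHom), fun h ↦ val_lt_one.ne ?_⟩
  exact congrArg Units.val ((EmbeddingLike.map_eq_one_iff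
    (f := WithZero.unitsWithZeroEquiv (α := Multiplicative ℤ))).1 h)

open IntermediateField.algebraAdjoinAdjoin in
theorem exists_monoidHom_int_ne_one_of_isAlgebraic_adjoin {E F : Type*} [Field E] [CharZero E]
    [Field F] [Algebra E F] [Algebra.EssFiniteType E F] {u : Fˣ} (hu : Transcendental E (u : F))
    (halg : Algebra.IsAlgebraic (IntermediateField.adjoin E {(u : F)}) F) :
    ∃ v : Fˣ →* Multiplicative ℤ, v u ≠ 1 := by
  let e := Polynomial.algEquivOfTranscendental E (u : F) hu
  have : IsPrincipalIdealRing (Algebra.adjoin E {(u : F)}) :=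
    IsPrincipalIdealRing.of_surjective e.toRingHom e.surjective
  have : Algebra.EssFiniteType (IntermediateField.adjoin E {(u : F)}) F :=
    Algebra.EssFiniteType.of_comp E _ F
  have : FiniteDimensional (IntermediateField.adjoin E {(u : F)}) F :=
    Algebra.finite_of_essFiniteType_of_isAlgebraic
  have : CharZero (IntermediateField.adjoin E {(u : F)}) := charZero_of_injective_algebraMap
    (algebraMap E _).injective
  refine exists_monoidHom_int_ne_one_of_dedekind (L := IntermediateField.adjoin E {(u : F)})
    (a := e Polynomial.X) ?_ (by simp [e])
  rw [MulEquiv.isUnit_map]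
  exact Polynomial.not_isUnit_X

open IntermediateField.algebraAdjoinAdjoin in
theorem exists_monoidHom_int_ne_one_of_transcendental {K F : Type*} [Field K] [CharZero K]
    [Field F] [Algebra K F] [Algebra.EssFiniteType K F] {u : Fˣ}
    (hu : Transcendental K (u : F)) : ∃ v : Fˣ →* Multiplicative ℤ, v u ≠ 1 := by
  obtain ⟨s, hus, hs⟩ := exists_isTranscendenceBasis_superset (R := K) (s := {(u : F)})
    (algebraicIndependent_unique_type_iff.2 hu)
  have hus : (u : F) ∈ s := hus rfl
  -- Over `E`, the field `F` is algebraic over `E(u)`, and `u` is a prime element of the PID `E[u]`.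
  let E := IntermediateField.adjoin K (s \ {(u : F)})
  have transcendental_u : Transcendental E (u : F) := by
    have h := hs.1.transcendental_adjoin (s := {x : s | (x : F) ≠ u}) (i := ⟨u, hus⟩) (by simp)
    have hs' : Subtype.val '' {x : s | (x : F) ≠ u} = s \ {(u : F)} := by ext; simp [and_comm]
    rw [hs'] at h
    exact fun hE ↦ h ((IsFractionRing.isAlgebraic_iff (Algebra.adjoin K (s \ {(u : F)})) E F).2 hE)
  have : Algebra.EssFiniteType E F := Algebra.EssFiniteType.of_comp K E F
  refine exists_monoidHom_int_ne_one_of_isAlgebraic_adjoin transcendental_u ?_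
  have adjoin_u : (IntermediateField.adjoin E {(u : F)}).restrictScalars K =
      IntermediateField.adjoin K s := by
    rw [IntermediateField.adjoin_adjoin_left, Set.sdiff_union_of_subset (by simpa)]
  have h := hs.isAlgebraic_field
  rw [Subtype.range_coe, ← adjoin_u] at h
  exact h

theorem exists_forall_dvd_mul_of_prod_zpow_eq_pow {K F ι : Type*} [Field K] [CharZero K] [Field F]
    [Algebra K F] [Algebra.EssFiniteType K F] [Fintype ι] (y : ι → Fˣ)
    (hy : ∀ c : ι → ℤ, c ≠ 0 → Transcendental K ((∏ i, y i ^ c i : Fˣ) : F)) :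
    ∃ N : ℕ, N ≠ 0 ∧
      ∀ (M : ℕ) (c : ι → ℤ) (g : Fˣ), ∏ i, y i ^ c i = g ^ M → ∀ i, (M : ℤ) ∣ N * c i := by
  obtain ⟨N, hN0, hN⟩ :=
    exists_forall_dvd_mul_of_sum_smul_eq_smul (R := ℤ) (fun i ↦ Additive.ofMul (y i)) fun c hc ↦ by
      obtain ⟨v, hv⟩ := exists_monoidHom_int_ne_one_of_transcendental (hy c hc)
      simp only [← ofMul_zpow, ← ofMul_prod]
      exact ⟨(MonoidHom.toAdditiveLeft v).toIntLinearMap, hv⟩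
  refine ⟨N.natAbs, Int.natAbs_ne_zero.2 hN0, fun M c g h i ↦ ?_⟩
  have := hN M c (Additive.ofMul g) (by simpa [← ofMul_zpow, ← ofMul_prod, ← ofMul_pow] using h) i
  rwa [Int.natCast_natAbs, ← abs_dvd_abs, abs_mul, abs_abs, ← abs_mul, abs_dvd_abs]

end DiscreteValuation

/-- Evaluation of a polynomial at a point of the algebraic torus `(Kˣ)^ι`. -/
noncomputable abbrev evalAt {ι K : Type*} [Field K] (x : ι → Kˣ) : MvPolynomial ι K →+* K :=
  MvPolynomial.eval fun i ↦ (x i : K)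

section RootsOfUnity

variable {ι K : Type*} [Fintype ι] {M : ℕ} [NeZero M]

section Duality

variable [CommRing K] [IsDomain K]

theorem exists_pow_eq_of_rootsOfUnity_hom (ψ : rootsOfUnity M K →* Kˣ) :
    ∃ k : ℕ, ∀ ζ, ψ ζ = ζ ^ k := by
  obtain ⟨g, hg⟩ := IsCyclic.exists_monoid_generator (α := rootsOfUnity M K)
  have hψg : ψ g ∈ rootsOfUnity M K := by
    rw [mem_rootsOfUnity, ← map_pow, show g ^ M = 1 from Subtype.ext g.2, map_one]
  obtain ⟨k, hk⟩ := hg ⟨ψ g, hψg⟩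
  refine ⟨k, fun ζ ↦ ?_⟩
  obtain ⟨j, rfl⟩ := hg ζ
  have hk : (g : Kˣ) ^ k = ψ g := congrArg Subtype.val hk
  simp [← hk, pow_right_comm]

theorem exists_prod_pow_eq_of_pi_rootsOfUnity_hom (ψ : (ι → rootsOfUnity M K) →* Kˣ) :
    ∃ c : ι → ℕ, ∀ ζ, ψ ζ = ∏ i, (ζ i : Kˣ) ^ c i := by
  classical
  choose c hc using fun i ↦
    exists_pow_eq_of_rootsOfUnity_hom (ψ.comp (MonoidHom.mulSingle (fun _ ↦ rootsOfUnity M K) i))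
  refine ⟨c, fun ζ ↦ ?_⟩
  conv_lhs => rw [← Finset.univ_prod_mulSingle ζ, map_prod]
  exact Finset.prod_congr rfl fun i _ ↦ hc i (ζ i)

theorem exists_monomial_separating_subgroup [HasEnoughRootsOfUnity K M]
    (H : Subgroup (ι → rootsOfUnity M K)) {ζ : ι → rootsOfUnity M K} (hζ : ζ ∉ H) :
    ∃ c : ι → ℕ, (∀ η ∈ H, ∏ i, (η i : Kˣ) ^ c i = 1) ∧ ∏ i, (ζ i : Kˣ) ^ c i ≠ 1 := by
  have : HasEnoughRootsOfUnity K (Monoid.exponent (ι → rootsOfUnity M K)) :=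
    .of_dvd K (n := M) (Monoid.exponent_dvd_of_forall_pow_eq_one fun η ↦
      funext fun i ↦ Subtype.ext (η i).2)
  have hψ := mt (CommGroup.forall_monoidHom_apply_eq_one_iff K H ζ).1 hζ
  push Not at hψ
  obtain ⟨ψ, hψH, hψζ⟩ := hψ
  obtain ⟨c, hc⟩ := exists_prod_pow_eq_of_pi_rootsOfUnity_hom ψ
  exact ⟨c, fun η hη ↦ hc η ▸ hψH η hη, hc ζ ▸ hψζ⟩

end Duality

variable [Field K] [HasEnoughRootsOfUnity K M] [Fintype (rootsOfUnity M K)]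

theorem sum_rootsOfUnity_pow_eq_zero {k : ℕ} (hk : ¬ M ∣ k) :
    ∑ ζ : rootsOfUnity M K, ((ζ : Kˣ) : K) ^ k = 0 := by
  refine sum_hom_units_eq_zero
    (((Units.coeHom K).comp (rootsOfUnity M K).subtype).comp (powMonoidHom k)) fun h ↦ hk ?_
  obtain ⟨g, hg⟩ := HasEnoughRootsOfUnity.exists_primitiveRoot K M
  exact hg.dvd_of_pow_eq_one k (by simpa using DFunLike.congr_fun h hg.toRootsOfUnity)

theorem exists_evalAt_pow_eq_sum_evalAt_smul [DecidableEq ι]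
    (f : MvPolynomial ι K) :
    ∃ U : MvPolynomial ι K, ∀ x : ι → Kˣ,
      evalAt (x ^ M) U = ∑ ζ : ι → rootsOfUnity M K, evalAt (ζ • x) f := by
  induction f using MvPolynomial.induction_on' with
  | add p q hp hq =>
    obtain ⟨U, hU⟩ := hp
    obtain ⟨W, hW⟩ := hq
    exact ⟨U + W, fun x ↦ by simp only [map_add, hU, hW, Finset.sum_add_distrib]⟩
  | monomial s a =>
    have orbit_sum (x : ι → Kˣ) :
        ∑ ζ : ι → rootsOfUnity M K, evalAt (ζ • x) (MvPolynomial.monomial s a) =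
          a * (∏ i, (x i : K) ^ s i) * ∏ i, ∑ ζ : rootsOfUnity M K, ((ζ : Kˣ) : K) ^ s i := by
      rw [Finset.prod_univ_sum, Fintype.piFinset_univ, Finset.mul_sum]
      refine Finset.sum_congr rfl fun ζ _ ↦ ?_
      rw [MvPolynomial.eval_monomial, Finsupp.prod_fintype _ _ fun _ ↦ pow_zero _]
      simp only [Pi.smul_apply', Subgroup.smul_def, smul_eq_mul, Units.val_mul, mul_pow,
        Finset.prod_mul_distrib]
      ring
    by_cases hs : ∀ i, M ∣ s i
    · choose t ht using hs
      refine ⟨MvPolynomial.C (a * ∏ i, ∑ ζ : rootsOfUnity M K, ((ζ : Kˣ) : K) ^ s i) *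
        ∏ i, MvPolynomial.X i ^ t i, fun x ↦ ?_⟩
      simp only [orbit_sum, map_mul, map_prod, map_pow, MvPolynomial.eval_C, MvPolynomial.eval_X,
        Pi.pow_apply, Units.val_pow_eq_pow_val, ← pow_mul, ← ht]
      ring
    · push Not at hs
      obtain ⟨i, hi⟩ := hs
      have hprod : ∏ i, ∑ ζ : rootsOfUnity M K, ((ζ : Kˣ) : K) ^ s i = 0 :=
        Finset.prod_eq_zero (Finset.mem_univ i) (sum_rootsOfUnity_pow_eq_zero hi)
      exact ⟨0, fun x ↦ by rw [orbit_sum, hprod, mul_zero, map_zero]⟩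

end RootsOfUnity

theorem isIrreducible_image_iff_of_isInducing {X Y : Type*} [TopologicalSpace X]
    [TopologicalSpace Y] {f : X → Y} (hf : IsInducing f) {s : Set X} :
    IsIrreducible (f '' s) ↔ IsIrreducible s := by
  refine ⟨fun h ↦ ⟨h.nonempty.of_image, ?_⟩, fun h ↦ h.image f hf.continuous.continuousOn⟩
  intro u v hu hv ⟨x, hxs, hxu⟩ ⟨y, hys, hyv⟩
  obtain ⟨u, hu', rfl⟩ := hf.isOpen_iff.1 hu
  obtain ⟨v, hv', rfl⟩ := hf.isOpen_iff.1 hv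
  obtain ⟨_, ⟨z, hzs, rfl⟩, hz⟩ :=
    h.2 u v hu' hv' ⟨f x, ⟨x, hxs, rfl⟩, hxu⟩ ⟨f y, ⟨y, hys, rfl⟩, hyv⟩
  exact ⟨z, hzs, hz⟩

theorem isIrreducible_of_retraction {X : Type*} [TopologicalSpace X] [IrreducibleSpace X]
    {φ : X → X} (hφ : Continuous φ) {S : Set X} (hφS : ∀ x, φ x ∈ S) (hS : ∀ x ∈ S, φ x = x) :
    IsIrreducible S := by
  have range_eq : φ '' Set.univ = S := by
    refine Set.Subset.antisymm ?_ fun x hx ↦ ⟨x, trivial, hS x hx⟩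
    rintro _ ⟨x, -, rfl⟩
    exact hφS x
  rw [← range_eq]
  exact (IrreducibleSpace.isIrreducible_univ X).image φ hφ.continuousOn

section ZariskiTopology

variable {ι κ K : Type*} [Field K]

/-- The prime ideal of all polynomials vanishing at a point of the torus. -/
noncomputable def toSpec (x : ι → Kˣ) : PrimeSpectrum (MvPolynomial ι K) :=
  MvPolynomial.pointToPoint fun i ↦ (x i : K)

/-- The Zariski topology of `(Kˣ)^ι`, induced from the spectrum of the polynomial ring. -/
noncomputable abbrev zariskiTopology (ι K : Type*) [Field K] : TopologicalSpace (ι → Kˣ) :=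
  .induced toSpec inferInstance

end ZariskiTopology

attribute [local instance] zariskiTopology

section ZariskiTopology

variable {ι κ K : Type*} [Field K]

theorem isInducing_toSpec : IsInducing (toSpec : (ι → Kˣ) → PrimeSpectrum (MvPolynomial ι K)) :=
  ⟨rfl⟩

theorem mem_asIdeal_toSpec {x : ι → Kˣ} {p : MvPolynomial ι K} :
    p ∈ (toSpec x).asIdeal ↔ evalAt x p = 0 :=
  MvPolynomial.mem_vanishingIdeal_singleton_iff _ _

theorem mem_vanishingIdeal_image_toSpec {V : Set (ι → Kˣ)} {p : MvPolynomial ι K} :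
    p ∈ PrimeSpectrum.vanishingIdeal (toSpec '' V) ↔ ∀ x ∈ V, evalAt x p = 0 := by
  simp [PrimeSpectrum.mem_vanishingIdeal, mem_asIdeal_toSpec]

theorem isClosed_iff_exists_zeros {C : Set (ι → Kˣ)} :
    IsClosed C ↔ ∃ S : Set (MvPolynomial ι K), C = {x | ∀ p ∈ S, evalAt x p = 0} := by
  simp_rw [isInducing_toSpec.isClosed_iff, PrimeSpectrum.isClosed_iff_zeroLocus]
  have preimage_zeroLocus (S : Set (MvPolynomial ι K)) :
      toSpec ⁻¹' PrimeSpectrum.zeroLocus S = {x | ∀ p ∈ S, evalAt x p = 0} := by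
    ext x
    exact forall₂_congr fun p _ ↦ mem_asIdeal_toSpec
  constructor
  · rintro ⟨_, ⟨S, rfl⟩, rfl⟩
    exact ⟨S, preimage_zeroLocus S⟩
  · rintro ⟨S, rfl⟩
    exact ⟨_, ⟨S, rfl⟩, preimage_zeroLocus S⟩

theorem isClosed_setOf_evalAt_eq_zero (p : MvPolynomial ι K) :
    IsClosed {x : ι → Kˣ | evalAt x p = 0} :=
  isClosed_iff_exists_zeros.2 ⟨{p}, by simp⟩

theorem exists_evalAt_ne_zero_of_notMem {C : Set (ι → Kˣ)} (hC : IsClosed C) {x : ι → Kˣ}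
    (hx : x ∉ C) : ∃ p : MvPolynomial ι K, (∀ y ∈ C, evalAt y p = 0) ∧ evalAt x p ≠ 0 := by
  obtain ⟨S, rfl⟩ := isClosed_iff_exists_zeros.1 hC
  simp only [Set.mem_ofPred_eq, not_forall] at hx
  obtain ⟨p, hp, hpx⟩ := hx
  exact ⟨p, fun y hy ↦ hy p hp, hpx⟩

instance noetherianSpace_torus [Finite ι] : NoetherianSpace (ι → Kˣ) :=
  isInducing_toSpec.noetherianSpace

instance t1Space_torus : T1Space (ι → Kˣ) where
  t1 x := by
    refine isClosed_iff_exists_zeros.2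
      ⟨Set.range fun i ↦ MvPolynomial.X i - MvPolynomial.C (x i : K), ?_⟩
    ext y
    simp [sub_eq_zero, funext_iff, Units.ext_iff]

theorem isIrreducible_iff_isPrime_vanishingIdeal {V : Set (ι → Kˣ)} :
    IsIrreducible V ↔ (PrimeSpectrum.vanishingIdeal (toSpec '' V)).IsPrime := by
  rw [← PrimeSpectrum.isIrreducible_iff_vanishingIdeal_isPrime,
    isIrreducible_image_iff_of_isInducing isInducing_toSpec]

instance irreducibleSpace_torus [Infinite K] : IrreducibleSpace (ι → Kˣ) := by
  have vanishing_eq_bot :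
      PrimeSpectrum.vanishingIdeal (toSpec '' (⊤ : Set (ι → Kˣ))) = ⊥ := by
    refine (Submodule.eq_bot_iff _).2 fun p hp ↦ ?_
    refine MvPolynomial.funext_set (fun _ ↦ {0}ᶜ) (fun _ ↦ (Set.finite_singleton 0).infinite_compl)
      fun x hx ↦ ?_
    rw [map_zero]
    exact mem_vanishingIdeal_image_toSpec.1 hp (fun i ↦ Units.mk0 (x i) (hx i trivial)) trivial
  rw [irreducibleSpace_def, isIrreducible_iff_isPrime_vanishingIdeal, vanishing_eq_bot]
  exact Ideal.isPrime_bot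

/-- The functions on `(Kˣ)^ι` that are quotients of polynomials whose denominator vanishes
nowhere on the torus. -/
def regularFunctions (ι K : Type*) [Field K] : Subalgebra K ((ι → Kˣ) → K) where
  carrier := {f | ∃ a d : MvPolynomial ι K, ∀ x, evalAt x d ≠ 0 ∧ f x = evalAt x a / evalAt x d}
  mul_mem' := by
    rintro f g ⟨a, d, h⟩ ⟨a', d', h'⟩
    refine ⟨a * a', d * d', fun x ↦ ⟨?_, ?_⟩⟩
    · simpa using And.intro (h x).1 (h' x).1
    · rw [Pi.mul_apply, (h x).2, (h' x).2, map_mul, map_mul, div_mul_div_comm]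
  add_mem' := by
    rintro f g ⟨a, d, h⟩ ⟨a', d', h'⟩
    refine ⟨a * d' + d * a', d * d', fun x ↦ ⟨?_, ?_⟩⟩
    · simpa using And.intro (h x).1 (h' x).1
    · rw [Pi.add_apply, (h x).2, (h' x).2, div_add_div _ _ (h x).1 (h' x).1]
      simp
  algebraMap_mem' c := ⟨MvPolynomial.C c, 1, fun x ↦ by simp⟩

theorem mem_regularFunctions {f : (ι → Kˣ) → K} : f ∈ regularFunctions ι K ↔
    ∃ a d : MvPolynomial ι K, ∀ x, evalAt x d ≠ 0 ∧ f x = evalAt x a / evalAt x d :=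
  Iff.rfl

theorem evalAt_comp_mem_regularFunctions {φ : (ι → Kˣ) → κ → Kˣ}
    (hφ : ∀ j, (fun x ↦ (φ x j : K)) ∈ regularFunctions ι K) (p : MvPolynomial κ K) :
    (fun x ↦ evalAt (φ x) p) ∈ regularFunctions ι K := by
  induction p using MvPolynomial.induction_on with
  | C a =>
    simp only [MvPolynomial.eval_C]
    exact (regularFunctions ι K).algebraMap_mem a
  | add p q hp hq =>
    simp only [map_add]
    exact add_mem hp hq
  | mul_X p j hp =>
    simp only [map_mul, MvPolynomial.eval_X]
    exact mul_mem hp (hφ j)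

theorem isClosed_setOf_eq_zero {f : (ι → Kˣ) → K} (hf : f ∈ regularFunctions ι K) :
    IsClosed {x | f x = 0} := by
  obtain ⟨a, d, h⟩ := mem_regularFunctions.1 hf
  convert isClosed_setOf_evalAt_eq_zero a using 3 with x
  rw [(h x).2, div_eq_zero_iff, or_iff_left (h x).1]

/-- The invertible regular functions on `(Kˣ)^ι`. -/
def regularUnits (ι K : Type*) [Field K] : Subgroup ((ι → Kˣ) → Kˣ) where
  carrier := {f | (fun x ↦ (f x : K)) ∈ regularFunctions ι K}
  one_mem' := one_mem (regularFunctions ι K)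
  mul_mem' hf hg := (regularFunctions ι K).mul_mem hf hg
  inv_mem' {f} hf := by
    obtain ⟨a, d, h⟩ := mem_regularFunctions.1 hf
    refine mem_regularFunctions.2 ⟨d, a, fun x ↦ ⟨fun ha ↦ (f x).ne_zero ?_, ?_⟩⟩
    · rw [(h x).2, ha, zero_div]
    · rw [Pi.inv_apply, Units.val_inv_eq_inv_val, (h x).2, inv_div]

theorem mem_regularUnits {f : (ι → Kˣ) → Kˣ} :
    f ∈ regularUnits ι K ↔ (fun x ↦ (f x : K)) ∈ regularFunctions ι K :=
  Iff.rfl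

theorem const_mem_regularUnits (c : Kˣ) : (fun _ ↦ c) ∈ regularUnits ι K :=
  mem_regularUnits.2 ((regularFunctions ι K).algebraMap_mem (c : K))

theorem apply_mem_regularUnits (i : ι) : (fun x ↦ x i) ∈ regularUnits ι K :=
  mem_regularUnits.2 (mem_regularFunctions.2 ⟨MvPolynomial.X i, 1, fun x ↦ by simp⟩)

theorem isClosed_setOf_eq {f g : (ι → Kˣ) → Kˣ} (hf : f ∈ regularUnits ι K)
    (hg : g ∈ regularUnits ι K) : IsClosed {x | f x = g x} := by
  convert isClosed_setOf_eq_zero (sub_mem (mem_regularUnits.1 hf) (mem_regularUnits.1 hg))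
    using 3 with x
  simp [sub_eq_zero, Units.ext_iff]

theorem continuous_of_forall_mem_regularUnits {φ : (ι → Kˣ) → κ → Kˣ}
    (hφ : ∀ j, (fun x ↦ φ x j) ∈ regularUnits ι K) : Continuous φ := by
  refine continuous_iff_isClosed.2 fun C hC ↦ ?_
  obtain ⟨S, rfl⟩ := isClosed_iff_exists_zeros.1 hC
  have preimage_eq : φ ⁻¹' {y | ∀ p ∈ S, evalAt y p = 0} = ⋂ p ∈ S, {x | evalAt (φ x) p = 0} := by
    ext; simp
  rw [preimage_eq]
  exact isClosed_biInter fun p _ ↦ isClosed_setOf_eq_zero (evalAt_comp_mem_regularFunctions hφ p)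

end ZariskiTopology

section FiniteQuotient

theorem exists_subset_of_subset_iUnion_of_isIrreducible {X κ : Type*} [TopologicalSpace X]
    [Finite κ] {W : Set X} (hW : IsIrreducible W) {C : κ → Set X} (hC : ∀ k, IsClosed (C k))
    (h : W ⊆ ⋃ k, C k) : ∃ k, W ⊆ C k := by
  classical
  have := Fintype.ofFinite κ
  obtain ⟨_, hZ, hWZ⟩ := isIrreducible_iff_sUnion_isClosed.1 hW (Finset.univ.image C)
    (Finset.forall_mem_image.2 fun k _ ↦ hC k) (by simpa using h)
  obtain ⟨k, -, rfl⟩ := Finset.mem_image.1 hZ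
  exact ⟨k, hWZ⟩

theorem exists_isIrreducible_image_eq {X Y : Type*} [TopologicalSpace X] [NoetherianSpace X]
    [TopologicalSpace Y] {f : X → Y} (hf : Continuous f) (hf' : IsClosedMap f) {V : Set Y}
    (hV : IsClosed V) (hVirr : IsIrreducible V) (hVf : V ⊆ Set.range f) :
    ∃ W, IsClosed W ∧ IsIrreducible W ∧ f '' W = V := by
  obtain ⟨S, hSfin, hSclosed, hSirr, hS⟩ :=
    NoetherianSpace.exists_finite_set_isClosed_irreducible (hV.preimage hf)
  have := hSfin.to_subtype
  have hcover : V ⊆ ⋃ W : S, f '' W := by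
    rw [← Set.image_iUnion, ← Set.sUnion_eq_iUnion, ← hS, Set.image_preimage_eq_of_subset hVf]
  obtain ⟨⟨W, hW⟩, hVW⟩ := exists_subset_of_subset_iUnion_of_isIrreducible hVirr
    (fun W : S ↦ hf' W (hSclosed W W.2)) hcover
  refine ⟨W, hSclosed W hW, hSirr W hW, Set.Subset.antisymm ?_ hVW⟩
  rw [Set.image_subset_iff, hS]
  exact Set.subset_sUnion_of_mem hW

theorem smul_set_eq_of_subset_smul_set {G X : Type*} [Group G] [Finite G] [MulAction G X] {g : G}
    {W : Set X} (h : W ⊆ g • W) : g • W = W := by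
  have subset_pow (k : ℕ) : g • W ⊆ g ^ (k + 1) • W := by
    induction k with
    | zero => simp
    | succ k ih => exact ih.trans (by simpa [pow_succ, mul_smul] using h)
  obtain ⟨k, hk, hgk⟩ := (isOfFinOrder_of_finite g).exists_pow_eq_one
  refine Set.Subset.antisymm ?_ h
  simpa [Nat.sub_add_cancel hk, hgk] using subset_pow (k - 1)

variable {G X Y : Type*} [Group G] [MulAction G X] {π : X → Y}

theorem image_smul_set_eq (hπ : ∀ x y, π x = π y ↔ x ∈ MulAction.orbit G y) (g : G) (W : Set X) :
    π '' (g • W) = π '' W := by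
  have invariant (x : X) : π (g • x) = π x := (hπ _ _).2 (MulAction.mem_orbit x g)
  rw [← Set.image_smul, Set.image_image]
  simp only [invariant]

theorem preimage_image_subset_of_forall_smul_set_eq
    (hπ : ∀ x y, π x = π y ↔ x ∈ MulAction.orbit G y) {W : Set X} (hW : ∀ g : G, g • W = W) :
    π ⁻¹' (π '' W) ⊆ W := by
  rintro x ⟨w, hw, hwx⟩
  obtain ⟨g, rfl⟩ := (hπ _ _).1 hwx.symm
  rw [← hW g]
  exact Set.smul_mem_smul_set hw

variable [Finite G] [TopologicalSpace X] [ContinuousConstSMul G X]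

theorem exists_subset_smul_set_of_image_subset (hπ : ∀ x y, π x = π y ↔ x ∈ MulAction.orbit G y)
    {W C : Set X} (hW : IsIrreducible W) (hC : IsClosed C) (hWC : π '' W ⊆ π '' C) :
    ∃ g : G, W ⊆ g • C := by
  refine exists_subset_of_subset_iUnion_of_isIrreducible hW hC.smul fun x hx ↦ ?_
  obtain ⟨y, hy, hyx⟩ := hWC ⟨x, hx, rfl⟩
  obtain ⟨g, rfl⟩ := (hπ _ _).1 hyx.symm
  exact Set.mem_iUnion.2 ⟨g, Set.smul_mem_smul_set hy⟩

variable (G) in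
theorem exists_mem_forall_notMem_smul_set {W : Set X} (hW : IsClosed W)
    (hWirr : IsIrreducible W) :
    ∃ x ∈ W, ∀ g ∉ MulAction.stabilizer G W, x ∉ g • W := by
  by_contra! h
  obtain ⟨⟨g, hg⟩, hWg⟩ := exists_subset_of_subset_iUnion_of_isIrreducible hWirr
    (C := fun g : {g // g ∉ MulAction.stabilizer G W} ↦ (g : G) • W) (fun g ↦ hW.smul (g : G))
    fun x hx ↦ by simpa using h x hx
  exact hg (smul_set_eq_of_subset_smul_set hWg)

theorem image_eq_of_maximal (hπ : ∀ x y, π x = π y ↔ x ∈ MulAction.orbit G y) {V' W : Set X}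
    {V : Set Y} (hW : IsClosed W) (hWirr : IsIrreducible W) (hWV : π '' W = V)
    (hV' : Maximal (fun Z ↦ IsClosed Z ∧ IsIrreducible Z ∧ π '' Z ⊆ V) V') : π '' V' = V := by
  obtain ⟨g, hg⟩ :=
    exists_subset_smul_set_of_image_subset hπ hV'.prop.2.1 hW (hWV ▸ hV'.prop.2.2)
  have hgW : π '' (g • W) = V := by rw [image_smul_set_eq hπ, hWV]
  rw [hV'.eq_of_subset ⟨hW.smul g, hWirr.image _ (continuous_const_smul g).continuousOn, hgW.le⟩ hg,
    hgW]

theorem maximal_of_image_eq (hπ : ∀ x y, π x = π y ↔ x ∈ MulAction.orbit G y) {W : Set X}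
    {V : Set Y} (hW : IsClosed W) (hWirr : IsIrreducible W) (hWV : π '' W = V) :
    Maximal (fun Z ↦ IsClosed Z ∧ IsIrreducible Z ∧ π '' Z ⊆ V) W := by
  refine ⟨⟨hW, hWirr, hWV.le⟩, fun Z hZ hWZ ↦ ?_⟩
  obtain ⟨g, hg⟩ := exists_subset_smul_set_of_image_subset hπ hZ.2.1 hW (hWV ▸ hZ.2.2)
  exact hg.trans (smul_set_eq_of_subset_smul_set (hWZ.trans hg)).le

end FiniteQuotient

section PowerMap

variable {ι K : Type*} [Field K] {M : ℕ}

instance continuousConstSMul_torus :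
    ContinuousConstSMul (ι → rootsOfUnity M K) (ι → Kˣ) where
  continuous_const_smul ζ := continuous_of_forall_mem_regularUnits fun i ↦
    mul_mem (const_mem_regularUnits (ζ i : Kˣ)) (apply_mem_regularUnits i)

theorem continuous_pow_torus (M : ℕ) : Continuous fun x : ι → Kˣ ↦ x ^ M :=
  continuous_of_forall_mem_regularUnits fun i ↦ pow_mem (apply_mem_regularUnits i) M

theorem pow_eq_pow_iff_mem_orbit (x y : ι → Kˣ) :
    x ^ M = y ^ M ↔ x ∈ MulAction.orbit (ι → rootsOfUnity M K) y := by
  constructor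
  · refine fun h ↦ ⟨fun i ↦ ⟨x i / y i, ?_⟩, funext fun i ↦ div_mul_cancel (x i) (y i)⟩
    rw [mem_rootsOfUnity, div_pow, div_eq_one]
    exact congrFun h i
  · rintro ⟨ζ, rfl⟩
    ext i
    have hζ : (ζ i : Kˣ) ^ M = 1 := (ζ i).2
    simp [Subgroup.smul_def, mul_pow, hζ]

theorem pow_torus_surjective [IsAlgClosed K] [NeZero M] :
    Function.Surjective fun x : ι → Kˣ ↦ x ^ M := by
  intro y
  choose x hx using fun i ↦ IsAlgClosed.exists_pow_nat_eq (y i : K) (NeZero.pos M)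
  have x_ne_zero (i : ι) : x i ≠ 0 := by
    rintro h
    exact (y i).ne_zero (by rw [← hx i, h, zero_pow (NeZero.ne M)])
  exact ⟨fun i ↦ Units.mk0 (x i) (x_ne_zero i), funext fun i ↦ Units.ext (hx i)⟩

theorem smul_torus_injective (x : ι → Kˣ) :
    Function.Injective fun ζ : ι → rootsOfUnity M K ↦ ζ • x := fun _ _ h ↦
  funext fun i ↦ Subtype.ext (mul_right_cancel (congrFun h i))

theorem exists_sum_evalAt_smul_ne_zero [Fintype ι] [DecidableEq ι] [NeZero M]
    [Fintype (rootsOfUnity M K)] {C : Set (ι → Kˣ)} (hC : IsClosed C) {x : ι → Kˣ} (hx : x ∉ C) :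
    ∃ f : MvPolynomial ι K, (∀ y ∈ C, evalAt y f = 0) ∧
      ∑ ζ : ι → rootsOfUnity M K, evalAt (ζ • x) f ≠ 0 := by
  have hB : IsClosed (C ∪ (fun ζ : ι → rootsOfUnity M K ↦ ζ • x) '' {1}ᶜ) :=
    hC.union (Set.toFinite _).isClosed
  have hxB : x ∉ C ∪ (fun ζ : ι → rootsOfUnity M K ↦ ζ • x) '' {1}ᶜ := by
    rintro (h | ⟨ζ, hζ, hζx⟩)
    · exact hx h
    · exact hζ (smul_torus_injective x (hζx.trans (one_smul _ x).symm))
  obtain ⟨f, hf, hfx⟩ := exists_evalAt_ne_zero_of_notMem hB hxB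
  refine ⟨f, fun y hy ↦ hf y (Or.inl hy), ?_⟩
  rwa [Finset.sum_eq_single 1 (fun ζ _ hζ ↦ hf _ (Or.inr ⟨ζ, hζ, rfl⟩)) (by simp), one_smul]

section Finite

variable [Finite ι] [NeZero M] [IsAlgClosed K] [HasEnoughRootsOfUnity K M]

theorem isClosedMap_pow_torus : IsClosedMap fun x : ι → Kˣ ↦ x ^ M := by
  classical
  have := Fintype.ofFinite ι
  have := Fintype.ofFinite (rootsOfUnity M K)
  intro C hC
  refine isClosed_iff_exists_zeros.2 ⟨{U | ∀ x ∈ C, evalAt (x ^ M) U = 0},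
    Set.Subset.antisymm ?_ fun y hy ↦ ?_⟩
  · rintro _ ⟨x, hx, rfl⟩ U hU
    exact hU x hx
  obtain ⟨x, rfl⟩ := pow_torus_surjective (M := M) y
  by_contra hxC
  have hx : x ∉ ⋃ ζ : ι → rootsOfUnity M K, ζ • C := by
    simp only [Set.mem_iUnion, not_exists]
    rintro ζ ⟨z, hz, rfl⟩
    exact hxC ⟨z, hz, ((pow_eq_pow_iff_mem_orbit _ _).2 (MulAction.mem_orbit z ζ)).symm⟩
  obtain ⟨f, hf, hfx⟩ := exists_sum_evalAt_smul_ne_zero (M := M)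
    (isClosed_iUnion_of_finite hC.smul) hx
  obtain ⟨U, hU⟩ := exists_evalAt_pow_eq_sum_evalAt_smul (M := M) f
  refine hfx (hU x ▸ hy U fun z hz ↦ ?_)
  rw [hU]
  exact Finset.sum_eq_zero fun ζ _ ↦ hf _ (Set.mem_iUnion.2 ⟨ζ, Set.smul_mem_smul_set hz⟩)

theorem exists_isIrreducible_image_pow_eq {V : Set (ι → Kˣ)} (hV : IsClosed V)
    (hVirr : IsIrreducible V) : ∃ W, IsClosed W ∧ IsIrreducible W ∧ (· ^ M) '' W = V :=
  exists_isIrreducible_image_eq (continuous_pow_torus M) isClosedMap_pow_torus hV hVirr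
    fun y _ ↦ pow_torus_surjective y

end Finite

theorem exists_monomial_mul_evalAt_pow_eq [Fintype ι] [NeZero M] [HasEnoughRootsOfUnity K M]
    {W : Set (ι → Kˣ)} (hW : IsClosed W) (hWirr : IsIrreducible W) {c : ι → ℕ}
    (hc : ∀ ζ ∈ MulAction.stabilizer (ι → rootsOfUnity M K) W, ∏ i, (ζ i : Kˣ) ^ c i = 1) :
    ∃ U Q : MvPolynomial ι K, (∃ x ∈ W, evalAt (x ^ M) U ≠ 0) ∧
      ∀ x ∈ W, (∏ i, (x i : K) ^ c i) * evalAt (x ^ M) U = evalAt (x ^ M) Q := by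
  classical
  have := Fintype.ofFinite (rootsOfUnity M K)
  obtain ⟨x₀, hx₀, hx₀W⟩ :=
    exists_mem_forall_notMem_smul_set (ι → rootsOfUnity M K) hW hWirr
  obtain ⟨f, hf, hfx₀⟩ := exists_sum_evalAt_smul_ne_zero (M := M) (x := x₀)
    (C := ⋃ ζ ∈ {ζ | ζ ∉ MulAction.stabilizer (ι → rootsOfUnity M K) W}, ζ • W)
    ((Set.toFinite _).isClosed_biUnion fun ζ _ ↦ hW.smul ζ) (by simpa using hx₀W)
  -- As `f` vanishes on every `ζ • W ≠ W`, orbit sums over `W` see only the stabilizer of `W`, and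
  -- the monomial is invariant under that stabilizer.
  obtain ⟨U, hU⟩ := exists_evalAt_pow_eq_sum_evalAt_smul (M := M) f
  obtain ⟨Q, hQ⟩ := exists_evalAt_pow_eq_sum_evalAt_smul (M := M)
    ((∏ i, MvPolynomial.X i ^ c i) * f)
  refine ⟨U, Q, ⟨x₀, hx₀, hU x₀ ▸ hfx₀⟩, fun x hx ↦ ?_⟩
  rw [hU, hQ, Finset.mul_sum]
  refine Finset.sum_congr rfl fun ζ _ ↦ ?_
  by_cases hζ : ζ ∈ MulAction.stabilizer (ι → rootsOfUnity M K) W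
  · have hζc : ∏ i, ((ζ i : Kˣ) : K) ^ c i = 1 := by
      simpa using congrArg Units.val (hc ζ hζ)
    simp [Subgroup.smul_def, mul_pow, Finset.prod_mul_distrib, hζc]
  · rw [map_mul, hf (ζ • x) (Set.mem_biUnion hζ (Set.smul_mem_smul_set hx)), mul_zero, mul_zero]

end PowerMap

section Varieties

variable {K ι : Type} [Field K]

theorem isZClosed_iff_isClosed {V : Set (ι → Kˣ)} : IsZClosed K V ↔ IsClosed V :=
  isClosed_iff_exists_zeros.symm

theorem isIrredVar_iff {V : Set (ι → Kˣ)} : IsIrredVar K V ↔ IsClosed V ∧ IsIrreducible V := by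
  simp only [IsIrredVar, isZClosed_iff_isClosed, IsIrreducible,
    isPreirreducible_iff_isClosed_union_isClosed]

theorem zcl_eq_self {V : Set (ι → Kˣ)} (hV : IsClosed V) : zcl K V = V :=
  Set.Subset.antisymm (Set.sInter_subset_of_mem ⟨isZClosed_iff_isClosed.2 hV, Set.Subset.rfl⟩)
    (Set.subset_sInter fun _ hC ↦ hC.2)

theorem isIrredComponent_mroot_iff {m : ℕ} {V' V : Set (ι → Kˣ)} :
    IsIrredComponent K V' (mroot K m V) ↔
      Maximal (fun Z ↦ IsClosed Z ∧ IsIrreducible Z ∧ (· ^ m) '' Z ⊆ V) V' := by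
  have subset_mroot (Z : Set (ι → Kˣ)) : Z ⊆ mroot K m V ↔ (· ^ m) '' Z ⊆ V :=
    Set.image_subset_iff.symm
  simp only [IsIrredComponent, isIrredVar_iff, subset_mroot, maximal_iff, ← and_assoc]
  grind

end Varieties

section Characters

variable {ι K : Type*} [Field K]

theorem exists_forall_eq_of_zpow_eq {V : Set (ι → Kˣ)} (hV : IsIrreducible V) {f : (ι → Kˣ) → Kˣ}
    (hf : f ∈ regularUnits ι K) {d : ℤ} (hd : d ≠ 0) {a : Kˣ} (hfa : ∀ x ∈ V, f x ^ d = a) :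
    ∃ b, ∀ x ∈ V, f x = b := by
  have : NeZero d.natAbs := ⟨Int.natAbs_ne_zero.2 hd⟩
  obtain ⟨y, hy⟩ := hV.nonempty
  have ratio_mem (x : ι → Kˣ) (hx : x ∈ V) : f x / f y ∈ rootsOfUnity d.natAbs K := by
    rw [mem_rootsOfUnity, pow_natAbs_eq_one, div_zpow, hfa x hx, hfa y hy, div_self']
  obtain ⟨ζ, hζ⟩ := exists_subset_of_subset_iUnion_of_isIrreducible hV
    (C := fun ζ : rootsOfUnity d.natAbs K ↦ {x | f x = ζ * f y})
    (fun ζ ↦ isClosed_setOf_eq hf (const_mem_regularUnits _))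
    fun x hx ↦ Set.mem_iUnion.2 ⟨⟨_, ratio_mem x hx⟩, (div_mul_cancel _ _).symm⟩
  exact ⟨ζ * f y, hζ⟩

variable [Fintype ι]

/-- The character `x ↦ ∏ i, x i ^ c i` of the torus `(Kˣ)^ι`. -/
def character (c : ι → ℤ) : (ι → Kˣ) →* Kˣ where
  toFun x := ∏ i, x i ^ c i
  map_one' := by simp
  map_mul' x y := by simp [mul_zpow, Finset.prod_mul_distrib]

theorem character_apply (c : ι → ℤ) (x : ι → Kˣ) : character c x = ∏ i, x i ^ c i :=
  rfl

theorem character_mem_regularUnits (c : ι → ℤ) : ⇑(character c) ∈ regularUnits ι K := by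
  convert prod_mem fun i (_ : i ∈ Finset.univ) ↦ zpow_mem (apply_mem_regularUnits (K := K) i) (c i)
  ext x
  simp [character_apply]

theorem character_mul_const (c : ι → ℤ) (d : ℤ) (x : ι → Kˣ) :
    character (fun i ↦ d * c i) x = character c x ^ d := by
  simp only [character_apply, ← Finset.prod_zpow, ← zpow_mul, mul_comm d]

theorem character_zpow (c u : ι → ℤ) (t : Kˣ) :
    character c (fun i ↦ t ^ u i) = t ^ ∑ i, c i * u i := by
  simp only [character_apply, ← zpow_mul, mul_comm (u _)]
  exact (map_prod (zpowersHom Kˣ t) (fun i ↦ Multiplicative.ofAdd (c i * u i)) Finset.univ).symm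

theorem isIrreducible_ker_character [Infinite K] {c u : ι → ℤ} (hcu : ∑ i, c i * u i = 1) :
    IsIrreducible {x : ι → Kˣ | character c x = 1} := by
  refine isIrreducible_of_retraction (φ := fun x ↦ x / fun i ↦ character c x ^ u i)
    (continuous_of_forall_mem_regularUnits fun i ↦ ?_) (fun x ↦ ?_) fun x hx ↦ ?_
  · exact div_mem (apply_mem_regularUnits i) (zpow_mem (character_mem_regularUnits c) (u i))
  · change character c _ = 1
    rw [map_div, character_zpow, hcu, zpow_one, div_self']
  · have hx : character c x = 1 := hx
    ext i
    simp [hx]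

end Characters

section Freeness

variable {K ι : Type} [Field K] [Fintype ι]

theorem isSubtorus_ker_character [Infinite K] {c u : ι → ℤ} (hcu : ∑ i, c i * u i = 1) :
    IsSubtorus K {x : ι → Kˣ | character c x = 1} := by
  refine ⟨⟨1, fun _ ↦ c, ?_⟩, isIrredVar_iff.2 ⟨?_, isIrreducible_ker_character hcu⟩⟩
  · ext x
    exact ⟨fun h ↦ funext fun _ ↦ h, fun h ↦ congrFun h 0⟩
  · exact isClosed_setOf_eq (character_mem_regularUnits c) (const_mem_regularUnits 1)

theorem exists_character_ne_of_isFree_of_primitive [Infinite K] {V : Set (ι → Kˣ)}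
    (hfree : IsFree K V) {c u : ι → ℤ} (hcu : ∑ i, c i * u i = 1) (a : Kˣ) :
    ∃ x ∈ V, character c x ≠ a := by
  classical
  by_contra! h
  refine hfree ⟨_, fun i ↦ a ^ u i, isSubtorus_ker_character hcu, fun huniv ↦ ?_, fun x hx ↦ ?_⟩
  · obtain ⟨t, ht⟩ := Infinite.exists_notMem_finset ({0, 1} : Finset K)
    simp only [Finset.mem_insert, Finset.mem_singleton, not_or] at ht
    have hmem : (fun i ↦ Units.mk0 t ht.1 ^ u i) ∈ {x : ι → Kˣ | character c x = 1} :=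
      huniv ▸ Set.mem_univ _
    have htu : character c (fun i ↦ Units.mk0 t ht.1 ^ u i) = 1 := hmem
    rw [character_zpow, hcu, zpow_one] at htu
    exact ht.2 (congrArg Units.val htu)
  · refine ⟨x / fun i ↦ a ^ u i, ?_, mul_div_cancel _ _⟩
    change character c _ = 1
    rw [map_div, character_zpow, hcu, zpow_one, h x hx, div_self']

theorem exists_character_ne_of_isFree [Infinite K] {V : Set (ι → Kˣ)} (hV : IsIrreducible V)
    (hfree : IsFree K V) {c : ι → ℤ} (hc : c ≠ 0) (a : Kˣ) : ∃ x ∈ V, character c x ≠ a := by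
  obtain ⟨i, hi : c i ≠ 0⟩ := Function.ne_iff.1 hc
  obtain ⟨p, hp, hp_gcd⟩ := Finset.extract_gcd c ⟨i, Finset.mem_univ i⟩
  obtain ⟨u, hpu⟩ := Finset.gcd_eq_sum_mul Finset.univ p
  set d := Finset.univ.gcd c
  have hcp : c = fun j ↦ d * p j := funext fun j ↦ hp j (Finset.mem_univ j)
  have hd : d ≠ 0 := fun hd ↦ hi (by rw [hp i (Finset.mem_univ i), hd, zero_mul])
  by_contra! h
  obtain ⟨b, hb⟩ := exists_forall_eq_of_zpow_eq hV (character_mem_regularUnits p) hd fun x hx ↦ by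
    rw [← character_mul_const, ← hcp, h x hx]
  obtain ⟨x, hx, hxb⟩ := exists_character_ne_of_isFree_of_primitive hfree (hpu.symm.trans hp_gcd) b
  exact hxb (hb x hx)

end Freeness

section Dimension

variable {K : Type*} [Field K]

theorem le_card_of_strictMono_isIrreducible {ι : Type*} [Fintype ι] {d : ℕ}
    {W : Fin (d + 1) → Set (ι → Kˣ)} (hW : ∀ i, IsClosed (W i) ∧ IsIrreducible (W i))
    (hmono : StrictMono W) : d ≤ Fintype.card ι := by
  let chain : LTSeries (IrreducibleCloseds (ι → Kˣ)) :=
    ⟨d, fun i ↦ ⟨W i, (hW i).2, (hW i).1⟩, fun i ↦ hmono i.castSucc_lt_succ⟩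
  have dim_le : topologicalKrullDim (ι → Kˣ) ≤ Fintype.card ι := by
    refine isInducing_toSpec.topologicalKrullDim_le.trans_eq ?_
    rw [PrimeSpectrum.topologicalKrullDim_eq_ringKrullDim,
      MvPolynomial.ringKrullDim_of_isNoetherianRing, ringKrullDim_eq_zero_of_field, zero_add,
      Nat.card_eq_fintype_card]
  exact_mod_cast (Order.LTSeries.length_le_krullDim chain).trans dim_le

/-- The subtorus of `(Kˣ)ⁿ` on which all but the first `k` coordinates are `1`. -/
def coordinateTorus (K : Type*) [Field K] (n k : ℕ) : Set (Fin n → Kˣ) :=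
  {x | ∀ i : Fin n, k ≤ i → x i = 1}

theorem mem_coordinateTorus {n k : ℕ} {x : Fin n → Kˣ} :
    x ∈ coordinateTorus K n k ↔ ∀ i : Fin n, k ≤ i → x i = 1 :=
  Iff.rfl

theorem isClosed_coordinateTorus (n k : ℕ) : IsClosed (coordinateTorus K n k) := by
  have eq_iInter : coordinateTorus K n k = ⋂ (i : Fin n) (_ : k ≤ (i : ℕ)), {x | x i = 1} := by
    ext x
    simp [mem_coordinateTorus]
  rw [eq_iInter]
  exact isClosed_biInter fun i _ ↦
    isClosed_setOf_eq (apply_mem_regularUnits i) (const_mem_regularUnits 1)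

variable [Infinite K]

theorem isIrreducible_coordinateTorus (n k : ℕ) : IsIrreducible (coordinateTorus K n k) := by
  refine isIrreducible_of_retraction (φ := fun (x : Fin n → Kˣ) (i : Fin n) ↦
      if (i : ℕ) < k then x i else 1)
    (continuous_of_forall_mem_regularUnits fun i ↦ ?_) (fun x ↦ ?_)
    fun x hx ↦ funext fun i ↦ ?_
  · by_cases hi : (i : ℕ) < k
    · simpa only [if_pos hi] using apply_mem_regularUnits i
    · simpa only [if_neg hi] using const_mem_regularUnits 1
  · exact mem_coordinateTorus.2 fun i hi ↦ if_neg hi.not_gt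
  · exact ite_eq_left_iff.2 fun hi ↦ (hx i (not_lt.1 hi)).symm

theorem strictMono_coordinateTorus (n : ℕ) :
    StrictMono fun k : Fin (n + 1) ↦ coordinateTorus K n k := by
  intro k l hkl
  have hkl : (k : ℕ) < l := hkl
  refine ⟨fun x hx i hi ↦ hx i (hkl.le.trans hi), fun hlk ↦ ?_⟩
  classical
  obtain ⟨t, ht⟩ := Infinite.exists_notMem_finset ({0, 1} : Finset K)
  simp only [Finset.mem_insert, Finset.mem_singleton, not_or] at ht
  let i : Fin n := ⟨k, by omega⟩
  have hmem : Pi.mulSingle i (Units.mk0 t ht.1) ∈ coordinateTorus K n l := fun j hj ↦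
    Pi.mulSingle_eq_of_ne (Fin.ne_of_gt (show i < j from hkl.trans_le hj)) _
  have hti : Units.mk0 t ht.1 = 1 := by simpa [i] using hlk hmem i le_rfl
  exact ht.2 (congrArg Units.val hti)

end Dimension

section VarietyDimension

variable {K : Type} [Field K]

theorem vdim_univ [Infinite K] (n : ℕ) : vdim K (Set.univ : Set (Fin n → Kˣ)) = n := by
  refine IsGreatest.csSup_eq ⟨⟨fun k ↦ coordinateTorus K n k, fun k ↦ ⟨?_, Set.subset_univ _⟩,
    strictMono_coordinateTorus n⟩, ?_⟩
  · exact isIrredVar_iff.2 ⟨isClosed_coordinateTorus n k, isIrreducible_coordinateTorus n k⟩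
  · rintro d ⟨W, hW, hmono⟩
    simpa using le_card_of_strictMono_isIrreducible (fun i ↦ isIrredVar_iff.1 (hW i).1) hmono

theorem vdim_range_of_isClosedEmbedding {ι κ : Type} {σ : (ι → Kˣ) → κ → Kˣ}
    (hσ : IsClosedEmbedding σ) : vdim K (Set.range σ) = vdim K (Set.univ : Set (ι → Kˣ)) := by
  refine congrArg sSup (Set.ext fun d ↦ ⟨?_, ?_⟩)
  · rintro ⟨W, hW, hmono⟩
    have image_preimage (i : Fin (d + 1)) : σ '' (σ ⁻¹' W i) = W i :=
      Set.image_preimage_eq_of_subset (hW i).2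
    have image_ssubset_image {A B : Set (ι → Kˣ)} : σ '' A ⊂ σ '' B ↔ A ⊂ B :=
      hσ.injective.injOn.image_ssubset_image_iff (Set.subset_univ A) (Set.subset_univ B)
    refine ⟨fun i ↦ σ ⁻¹' W i, fun i ↦ ⟨isIrredVar_iff.2 ⟨?_, ?_⟩, Set.subset_univ _⟩,
      fun i j hij ↦ ?_⟩
    · exact (isIrredVar_iff.1 (hW i).1).1.preimage hσ.continuous
    · rw [← isIrreducible_image_iff_of_isInducing hσ.isInducing, image_preimage]
      exact (isIrredVar_iff.1 (hW i).1).2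
    · rw [← image_ssubset_image, image_preimage, image_preimage]
      exact hmono hij
  · rintro ⟨W, hW, hmono⟩
    refine ⟨fun i ↦ σ '' W i, fun i ↦ ⟨isIrredVar_iff.2 ⟨?_, ?_⟩, Set.image_subset_range _ _⟩,
      fun i j hij ↦ hσ.injective.image_strictMono (hmono hij)⟩
    · exact hσ.isClosedMap _ (isIrredVar_iff.1 (hW i).1).1
    · exact (isIrreducible_image_iff_of_isInducing hσ.isInducing).2 (isIrredVar_iff.1 (hW i).1).2

end VarietyDimension

section PowerGraph

theorem range_elim_pow {ι R : Type*} [Monoid R] (N : ℕ) :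
    Set.range (fun x : ι → R ↦ Sum.elim x (x ^ N)) = {p | ∀ i, p (.inr i) = p (.inl i) ^ N} := by
  ext p
  constructor
  · rintro ⟨x, rfl⟩ i
    rfl
  · refine fun h ↦ ⟨p ∘ Sum.inl, ?_⟩
    have hinr : (p ∘ Sum.inl) ^ N = p ∘ Sum.inr := funext fun i ↦ (h i).symm
    exact (congrArg _ hinr).trans (Sum.elim_comp_inl_inr p)

theorem isClosedEmbedding_elim_pow {ι K : Type*} [Field K] (N : ℕ) :
    IsClosedEmbedding fun x : ι → Kˣ ↦ Sum.elim x (x ^ N) := by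
  have continuous_elim : Continuous fun x : ι → Kˣ ↦ Sum.elim x (x ^ N) := by
    refine continuous_of_forall_mem_regularUnits ?_
    rintro (i | i)
    · exact apply_mem_regularUnits i
    · exact pow_mem (apply_mem_regularUnits i) N
  have continuous_inl : Continuous fun p : ι ⊕ ι → Kˣ ↦ p ∘ Sum.inl :=
    continuous_of_forall_mem_regularUnits fun i ↦ apply_mem_regularUnits (Sum.inl i)
  refine ⟨Function.LeftInverse.isEmbedding (fun _ ↦ rfl) continuous_inl continuous_elim, ?_⟩
  rw [range_elim_pow, Set.ofPred_forall]
  exact isClosed_iInter fun i ↦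
    isClosed_setOf_eq (apply_mem_regularUnits _) (pow_mem (apply_mem_regularUnits _) N)

variable {K : Type} [Field K] {n : ℕ}

theorem isAlgSubgroup_powerGraph (n N : ℕ) :
    IsAlgSubgroup K {p : Fin n ⊕ Fin n → Kˣ | ∀ i, p (.inr i) = p (.inl i) ^ N} := by
  refine ⟨n, .of fun j ↦ Sum.elim (Pi.single j (N : ℤ)) (Pi.single j (-1)), ?_⟩
  have prod_single (j : Fin n) (a : ℤ) (x : Fin n → Kˣ) :
      ∏ i, x i ^ (Pi.single j a : Fin n → ℤ) i = x j ^ a := by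
    rw [Finset.prod_eq_single j (fun i _ hij ↦ by rw [Pi.single_eq_of_ne hij, zpow_zero])
      (by simp), Pi.single_eq_same]
  have mpow_apply (p : Fin n ⊕ Fin n → Kˣ) :
      mpow K (.of fun j ↦ Sum.elim (Pi.single j (N : ℤ)) (Pi.single j (-1))) p =
        fun j ↦ p (.inl j) ^ N * (p (.inr j))⁻¹ := by
    funext j
    rw [mpow, Fintype.prod_sum_type, ← zpow_natCast, ← zpow_neg_one]
    exact congrArg₂ _ (prod_single j N (p ∘ Sum.inl)) (prod_single j (-1) (p ∘ Sum.inr))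
  ext p
  change _ ↔ mpow K _ p = 1
  rw [mpow_apply, funext_iff]
  exact forall_congr' fun i ↦ mul_inv_eq_one.trans eq_comm |>.symm

theorem isCorrTorus_powerGraph [IsAlgClosed K] (n N : ℕ) [NeZero N] :
    IsCorrTorus K {p : Fin n ⊕ Fin n → Kˣ | ∀ i, p (.inr i) = p (.inl i) ^ N} := by
  have hemb := isClosedEmbedding_elim_pow (ι := Fin n) (K := K) N
  refine ⟨⟨isAlgSubgroup_powerGraph n N, isIrredVar_iff.2 ?_⟩, ?_, fun x ↦ ⟨x ^ N, fun _ ↦ rfl⟩,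
    fun y ↦ ?_⟩
  · rw [← range_elim_pow, ← Set.image_univ]
    exact ⟨hemb.isClosedMap _ isClosed_univ,
      (IrreducibleSpace.isIrreducible_univ _).image _ hemb.continuous.continuousOn⟩
  · rw [← range_elim_pow, vdim_range_of_isClosedEmbedding hemb, vdim_univ]
  · obtain ⟨x, rfl⟩ := pow_torus_surjective (M := N) y
    exact ⟨x, fun _ ↦ rfl⟩

theorem toricCorr_powerGraph {N : ℕ} {V' V : Set (Fin n → Kˣ)} (hV' : IsClosed V')
    (hV : IsClosed V) (himage : (· ^ N) '' V' = V) :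
    ToricCorr K {p : Fin n ⊕ Fin n → Kˣ | ∀ i, p (.inr i) = p (.inl i) ^ N} V' V := by
  constructor
  · convert zcl_eq_self hV'
    refine Set.Subset.antisymm (Set.image_subset_iff.2 fun p hp ↦ hp.2.1) fun x hx ↦ ?_
    exact ⟨Sum.elim x (x ^ N), ⟨fun _ ↦ rfl, hx, himage ▸ ⟨x, hx, rfl⟩⟩, rfl⟩
  · convert zcl_eq_self hV
    refine Set.Subset.antisymm (Set.image_subset_iff.2 fun p hp ↦ hp.2.2) fun y hy ↦ ?_
    obtain ⟨x, hx, rfl⟩ := himage ▸ hy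
    exact ⟨Sum.elim x (x ^ N), ⟨fun _ ↦ rfl, hx, hy⟩, rfl⟩

end PowerGraph

theorem prod_zpow_mul_prod_pow_toNat_neg {ι G : Type*} [Fintype ι] [CommGroup G] (y : ι → G)
    (c : ι → ℤ) : (∏ i, y i ^ c i) * ∏ i, y i ^ (-c i).toNat = ∏ i, y i ^ (c i).toNat := by
  rw [← Finset.prod_mul_distrib]
  refine Finset.prod_congr rfl fun i _ ↦ ?_
  rw [← zpow_natCast, ← zpow_natCast, ← zpow_add]
  exact congrArg _ (by omega)

theorem exists_functionField.{u, v} {ι : Type u} {K : Type v} [Finite ι] [Field K]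
    {V : Set (ι → Kˣ)} (hV : IsIrreducible V) :
    ∃ (F : Type max u v) (_ : Field F) (_ : Algebra K F) (_ : Algebra.EssFiniteType K F)
      (θ : MvPolynomial ι K →ₐ[K] F), ∀ p, θ p = 0 ↔ ∀ x ∈ V, evalAt x p = 0 := by
  let I := PrimeSpectrum.vanishingIdeal (toSpec '' V)
  have : I.IsPrime := isIrreducible_iff_isPrime_vanishingIdeal.1 hV
  let F := FractionRing (MvPolynomial ι K ⧸ I)
  refine ⟨F, inferInstance, inferInstance, inferInstance,
    (IsScalarTower.toAlgHom K (MvPolynomial ι K ⧸ I) F).comp (Ideal.Quotient.mkₐ K I),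
    fun p ↦ ?_⟩
  rw [← mem_vanishingIdeal_image_toSpec, ← Ideal.Quotient.eq_zero_iff_mem]
  exact map_eq_zero_iff _ (IsFractionRing.injective (MvPolynomial ι K ⧸ I) F)

theorem transcendental_prod_zpow {ι K F : Type*} [Fintype ι] [Field K] [IsAlgClosed K] [Field F]
    [Algebra K F] {V : Set (ι → Kˣ)} {θ : MvPolynomial ι K →ₐ[K] F}
    (hθ : ∀ p, θ p = 0 → ∀ x ∈ V, evalAt x p = 0)
    {y : ι → Fˣ} (hy : ∀ i, (y i : F) = θ (.X i)) {c : ι → ℤ}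
    (hc : ∀ a, ∃ x ∈ V, character c x ≠ a) : Transcendental K ((∏ i, y i ^ c i : Fˣ) : F) := by
  intro halg
  obtain ⟨a, ha⟩ := minpoly.mem_range_of_degree_eq_one K _
    (IsAlgClosed.degree_eq_one_of_irreducible K (minpoly.irreducible halg.isIntegral))
  have ha0 : a ≠ 0 := by
    rintro rfl
    exact Units.ne_zero _ (ha.symm.trans (map_zero _))
  obtain ⟨x, hx, hxa⟩ := hc (Units.mk0 a ha0)
  have eval_eq := hθ (∏ i, .X i ^ (c i).toNat - .C a * ∏ i, .X i ^ (-c i).toNat) (by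
    have hya := congrArg Units.val (prod_zpow_mul_prod_pow_toNat_neg y c)
    rw [Units.val_mul, ← ha] at hya
    have hCa : θ (.C a) = algebraMap K F a := θ.commutes a
    simpa [hCa, ← hy, sub_eq_zero] using hya.symm) x hx
  refine hxa (mul_right_cancel (b := ∏ i, x i ^ (-c i).toNat) ?_)
  rw [character_apply, prod_zpow_mul_prod_pow_toNat_neg]
  exact Units.ext (by simpa [sub_eq_zero] using eval_eq)

section RootBound

variable {ι K : Type*} [Fintype ι] [Field K]

/-- `N` bounds the roots of monomials on `V`: if `x ^ c` agrees on `V` with the `M`-th power of a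
rational function `Q / U`, then `M` divides `N * c`. The equation is written without denominators,
and `U` must not vanish identically on `V`. -/
def IsRootBound (V : Set (ι → Kˣ)) (N : ℕ) : Prop :=
  ∀ M ≠ 0, ∀ (c : ι → ℕ) (U Q : MvPolynomial ι K), (∃ x ∈ V, evalAt x U ≠ 0) →
    (∀ x ∈ V, (∏ i, (x i : K) ^ c i) * evalAt x U ^ M = evalAt x Q ^ M) → ∀ i, M ∣ N * c i

theorem exists_isRootBound [IsAlgClosed K] [CharZero K] {V : Set (ι → Kˣ)} (hV : IsIrreducible V)
    (hchar : ∀ c : ι → ℤ, c ≠ 0 → ∀ a, ∃ x ∈ V, character c x ≠ a) :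
    ∃ N, N ≠ 0 ∧ IsRootBound V N := by
  obtain ⟨F, _, _, _, θ, hθ⟩ := exists_functionField hV
  obtain ⟨x₀, hx₀⟩ := hV.nonempty
  have hX (i : ι) : θ (.X i) ≠ 0 := fun h ↦ (x₀ i).ne_zero (by simpa using (hθ _).1 h x₀ hx₀)
  let y (i : ι) : Fˣ := Units.mk0 _ (hX i)
  obtain ⟨N, hN0, hN⟩ := exists_forall_dvd_mul_of_prod_zpow_eq_pow (K := K) y fun c hc ↦
    transcendental_prod_zpow (fun p ↦ (hθ p).1) (fun _ ↦ rfl) (hchar c hc)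
  refine ⟨N, hN0, fun M hM c U Q ⟨x, hx, hUx⟩ hUQ i ↦ ?_⟩
  have hU : θ U ≠ 0 := fun h ↦ hUx ((hθ U).1 h x hx)
  have θ_eq : (∏ i, y i ^ c i : Fˣ) * θ U ^ M = θ Q ^ M := by
    have h := (hθ ((∏ i, .X i ^ c i) * U ^ M - Q ^ M)).2 fun x hx ↦ by
      simpa [sub_eq_zero] using hUQ x hx
    simpa [y, sub_eq_zero] using h
  have hQ : θ Q ≠ 0 := fun h ↦
    mul_ne_zero (Units.ne_zero _) (pow_ne_zero M hU) (by rw [θ_eq, h, zero_pow hM])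
  have prod_eq_pow : ∏ i, y i ^ (c i : ℤ) = (Units.mk0 _ hQ / Units.mk0 _ hU) ^ M := by
    rw [div_pow, eq_div_iff_mul_eq']
    exact Units.ext (by simpa using θ_eq)
  exact_mod_cast hN M (fun i ↦ c i) _ prod_eq_pow i

variable {V W : Set (ι → Kˣ)} {N m : ℕ}

theorem IsRootBound.prod_pow_eq_one [NeZero N] [NeZero m] [HasEnoughRootsOfUnity K (m * N)]
    (hN : IsRootBound V N) (hW : IsClosed W) (hWirr : IsIrreducible W)
    (hWV : (· ^ (m * N)) '' W = V) {c : ι → ℕ}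
    (hc : ∀ ζ ∈ MulAction.stabilizer (ι → rootsOfUnity (m * N) K) W, ∏ i, (ζ i : Kˣ) ^ c i = 1)
    {ξ : ι → Kˣ} (hξ : ξ ^ m = 1) : ∏ i, ξ i ^ c i = 1 := by
  obtain ⟨U, Q, ⟨x₀, hx₀, hU⟩, hUQ⟩ := exists_monomial_mul_evalAt_pow_eq hW hWirr hc
  have hdvd := hN (m * N) (NeZero.ne _) c U Q ⟨x₀ ^ (m * N), hWV ▸ ⟨x₀, hx₀, rfl⟩, hU⟩ (by
    rw [← hWV]
    rintro _ ⟨x, hx, rfl⟩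
    simp only [← hUQ x hx, mul_pow, ← Finset.prod_pow, Pi.pow_apply, Units.val_pow_eq_pow_val,
      ← pow_mul, mul_comm (m * N)])
  refine Finset.prod_eq_one fun i _ ↦ ?_
  obtain ⟨k, hk⟩ : m ∣ c i :=
    Nat.dvd_of_mul_dvd_mul_left (NeZero.pos N) (mul_comm m N ▸ hdvd i)
  rw [hk, pow_mul, show ξ i ^ m = 1 from congrFun hξ i, one_pow]

theorem IsRootBound.smul_set_eq [IsAlgClosed K] [CharZero K] [NeZero N] [NeZero m]
    (hN : IsRootBound V N) (hW : IsClosed W) (hWirr : IsIrreducible W)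
    (hWV : (· ^ (m * N)) '' W = V) (ξ : ι → rootsOfUnity m K) : ξ • W = W := by
  let ζ (i : ι) : rootsOfUnity (m * N) K :=
    ⟨ξ i, rootsOfUnity_le_of_dvd (Dvd.intro N rfl) (ξ i).2⟩
  suffices hζ : ζ ∈ MulAction.stabilizer (ι → rootsOfUnity (m * N) K) W from hζ
  by_contra hζ
  obtain ⟨c, hc, hζc⟩ := exists_monomial_separating_subgroup _ hζ
  exact hζc (hN.prod_pow_eq_one hW hWirr hWV hc (ξ := fun i ↦ ξ i) (funext fun i ↦ (ξ i).2))

end RootBound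

theorem IsRootBound.kummerGeneric {ι K : Type} [Fintype ι] [Field K] [IsAlgClosed K] [CharZero K]
    {V V' : Set (ι → Kˣ)} {N : ℕ} [NeZero N] (hN : IsRootBound V N) (hV' : IsClosed V')
    (hV'irr : IsIrreducible V') (himage : (· ^ N) '' V' = V) : KummerGeneric K V' := by
  refine ⟨isIrredVar_iff.2 ⟨hV', hV'irr⟩, fun m hm ↦ ?_⟩
  have : NeZero m := ⟨Nat.one_le_iff_ne_zero.1 hm⟩
  obtain ⟨W, hW, hWirr, hWV'⟩ := exists_isIrreducible_image_pow_eq (M := m) hV' hV'irr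
  have hWV : (· ^ (m * N)) '' W = V := by
    rw [← himage, ← hWV', Set.image_image]
    simp only [pow_mul]
  have mroot_eq : mroot K m V' = W := by
    subst hWV'
    exact Set.Subset.antisymm
      (preimage_image_subset_of_forall_smul_set_eq pow_eq_pow_iff_mem_orbit
        (hN.smul_set_eq hW hWirr hWV))
      (Set.subset_preimage_image _ _)
  rw [mroot_eq]
  exact isIrredVar_iff.2 ⟨hW, hWirr⟩

/-- Every free irreducible variety is in toric correspondence with a Kummer
generic one; in fact for suitable `N ≥ 1` one may take any irreducible component of
`√[N]{V}` together with the graph of the `N`-th power map. -/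
theorem free_toricCorr_kummerGeneric
    (K : Type) [Field K] [IsAlgClosed K] [CharZero K]
    {n : ℕ} (V : Set (Fin n → Kˣ)) (hVirr : IsIrredVar K V) (hVfree : IsFree K V) :
    (∃ (V' : Set (Fin n → Kˣ)) (T : Set ((Fin n ⊕ Fin n) → Kˣ)),
      KummerGeneric K V' ∧ IsCorrTorus K T ∧ ToricCorr K T V' V) ∧
    ∃ N : ℕ, 1 ≤ N ∧
      IsCorrTorus K {p : (Fin n ⊕ Fin n) → Kˣ | ∀ i, p (Sum.inr i) = p (Sum.inl i) ^ N} ∧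
      ∀ V' : Set (Fin n → Kˣ), IsIrredComponent K V' (mroot K N V) →
        KummerGeneric K V' ∧
        ToricCorr K {p : (Fin n ⊕ Fin n) → Kˣ | ∀ i, p (Sum.inr i) = p (Sum.inl i) ^ N}
          V' V := by
  have hV := isIrredVar_iff.1 hVirr
  obtain ⟨N, hN0, hN⟩ := exists_isRootBound hV.2 fun c hc ↦
    exists_character_ne_of_isFree hV.2 hVfree hc
  have : NeZero N := ⟨hN0⟩
  obtain ⟨W, hW, hWirr, hWV⟩ := exists_isIrreducible_image_pow_eq (M := N) hV.1 hV.2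
  have component_spec (V' : Set (Fin n → Kˣ)) (hV' : IsIrredComponent K V' (mroot K N V)) :
      KummerGeneric K V' ∧ ToricCorr K {p | ∀ i, p (Sum.inr i) = p (Sum.inl i) ^ N} V' V := by
    have hmax := isIrredComponent_mroot_iff.1 hV'
    have himage := image_eq_of_maximal pow_eq_pow_iff_mem_orbit hW hWirr hWV hmax
    exact ⟨hN.kummerGeneric hmax.1.1 hmax.1.2.1 himage,
      toricCorr_powerGraph hmax.1.1 hV.1 himage⟩
  have isIrredComponent_W : IsIrredComponent K W (mroot K N V) :=
    isIrredComponent_mroot_iff.2 (maximal_of_image_eq pow_eq_pow_iff_mem_orbit hW hWirr hWV)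
  obtain ⟨hkummer, hcorr⟩ := component_spec W isIrredComponent_W
  exact ⟨⟨W, _, hkummer, isCorrTorus_powerGraph n N, hcorr⟩,
    N, Nat.one_le_iff_ne_zero.2 hN0, isCorrTorus_powerGraph n N, component_spec⟩

end BadFields
end

section
/- Let K be an algebraically closed field of characteristic 0, let A = ⟨A⟩ ⊆ Kˣ, and let b ∈ (Kˣ)ⁿ be a tuple such that ⟨A ∪ b⟩/A is minimal prealgebraic of length n. Then b does not belong to any coset c·T of a proper subtorus T of (Kˣ)ⁿ with c ∈ (Kˣ)ⁿ having all coordinates algebraic over the field ℚ(A). In particular, the Zariski locus of b over the algebraic closure of ℚ(A) inside K is a free variety. -/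
namespace BadFields

variable (K : Type) [Field K]

/-!
If `b` and a point `e` with coordinates algebraic over `ℚ(A)` lie in one coset of a proper
algebraic subgroup, then a nontrivial monomial `d = b ^ m` equals `e ^ m`, so it is algebraic over
`ℚ(A)`. The hull `⟨A ∪ {d}⟩` lies strictly between `A` and `⟨A ∪ b⟩`: it is larger than `A` because
the coordinates of `b` are multiplicatively independent over `A`, and it omits some coordinate of
`b` because a single monomial cannot generate `n ≥ 2` independent elements. Passing from `A` to
`⟨A ∪ {d}⟩` does not change `trdeg(b/·)` and cannot increase `ldim(b/·)` beyond `n = ldim(b/A)`, so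
`δ(b/·)` does not drop below `0`, contradicting minimality. For the locus of `b`, the
Nullstellensatz supplies a point `e` on it.
-/

lemma prod_zpow_single_sub_smul {ι G : Type*} [Fintype ι] [DecidableEq ι] [CommGroup G]
    (b : ι → G) (m : ι → ℤ) (i : ι) (k l : ℤ) :
    ∏ j, b j ^ (Pi.single i k - l • m : ι → ℤ) j = b i ^ k / (∏ j, b j ^ m j) ^ l := by
  have hsingle : ∏ j, b j ^ (Pi.single i k : ι → ℤ) j = b i ^ k := by
    rw [Fintype.prod_eq_single i fun j hj => by rw [Pi.single_eq_of_ne hj, zpow_zero],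
      Pi.single_eq_same]
  have hsmul : ∏ j, b j ^ (l • m) j = (∏ j, b j ^ m j) ^ l := by
    simp only [Pi.smul_apply, smul_eq_mul, mul_comm l, zpow_mul, Finset.prod_zpow]
  simp only [Pi.sub_apply, zpow_sub, ← div_eq_mul_inv, Finset.prod_div_distrib, hsingle, hsmul]

section DivHull

variable {K}

lemma subset_divHull (A : Set Kˣ) : A ⊆ (divHull K A : Set Kˣ) := fun x hx =>
  ⟨1, one_ne_zero, by rw [pow_one]; exact Subgroup.subset_closure hx⟩

lemma mem_divHull_of_pow_mem {A : Set Kˣ} {x : Kˣ} {k : ℕ} (hk : k ≠ 0)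
    (hx : x ^ k ∈ divHull K A) : x ∈ divHull K A := by
  obtain ⟨l, hl, hxl⟩ := hx
  exact ⟨k * l, mul_ne_zero hk hl, by rwa [pow_mul]⟩

lemma divHull_le_iff {A B : Set Kˣ} :
    divHull K A ≤ divHull K B ↔ A ⊆ (divHull K B : Set Kˣ) := by
  refine ⟨(subset_divHull A).trans, fun h x ⟨k, hk, hx⟩ => ?_⟩
  exact mem_divHull_of_pow_mem hk ((Subgroup.closure_le _).mpr h hx)

lemma divHull_divHull (A : Set Kˣ) : divHull K (divHull K A : Set Kˣ) = divHull K A :=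
  le_antisymm (divHull_le_iff.mpr le_rfl) (subset_divHull _)

lemma exists_pow_div_zpow_mem_of_mem_divHull_insert {A : Set Kˣ} {d x : Kˣ}
    (hx : x ∈ divHull K (insert d A)) :
    ∃ k : ℕ, k ≠ 0 ∧ ∃ l : ℤ, x ^ k / d ^ l ∈ divHull K A := by
  obtain ⟨k, hk, hxk⟩ := hx
  rw [Set.insert_eq, Subgroup.closure_union] at hxk
  obtain ⟨y, hy, a, ha, hya⟩ := Subgroup.mem_sup.mp hxk
  obtain ⟨l, rfl⟩ := Subgroup.mem_closure_singleton.mp hy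
  refine ⟨k, hk, l, ?_⟩
  rw [← hya, mul_div_cancel_left]
  exact (Subgroup.closure_le _).mpr (subset_divHull A) ha

end DivHull

section LinearDimension

variable {K} {A : Set Kˣ} {n : ℕ} {b : Fin n → Kˣ}

lemma ldimRel_le (A : Set Kˣ) (b : Fin n → Kˣ) : ldimRel K A b ≤ n :=
  Nat.sub_le _ _

lemma relLattice_eq_bot_of_ldimRel_eq (h : ldimRel K A b = n) : relLattice K A b = ⊥ := by
  have hle : Module.finrank ℤ (relLattice K A b) ≤ n := by
    simpa only [Module.finrank_fin_fun] using (relLattice K A b).finrank_le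
  rw [ldimRel] at h
  exact Submodule.finrank_eq_zero.mp (by omega)

lemma prod_zpow_notMem_divHull (hb : relLattice K A b = ⊥) {m : Fin n → ℤ} (hm : m ≠ 0) :
    ∏ i, b i ^ m i ∉ divHull K A := fun hmem =>
  hm <| (Submodule.mem_bot ℤ).mp (hb ▸ (hmem : m ∈ relLattice K A b))

lemma notMem_divHull_insert_prod_zpow (hb : relLattice K A b = ⊥) {m : Fin n → ℤ}
    {i j : Fin n} (hij : j ≠ i) (hmj : m j ≠ 0) :
    b i ∉ divHull K (insert (∏ t, b t ^ m t) A) := by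
  intro hi
  obtain ⟨k, hk, l, hkl⟩ := exists_pow_div_zpow_mem_of_mem_divHull_insert hi
  have hrel : (Pi.single i (k : ℤ) - l • m : Fin n → ℤ) = 0 := by
    by_contra hne
    refine prod_zpow_notMem_divHull hb hne ?_
    rwa [prod_zpow_single_sub_smul, zpow_natCast]
  have hl : l = 0 := by simpa [hij, hmj] using congrFun hrel j
  exact hk (by simpa [hl] using congrFun hrel i)

end LinearDimension

section TranscendenceDegree

variable {K}

/-- The group of units of `L` that are algebraic over `F`. A subgroup is used, so that monomials and
divisible hulls of algebraic units are seen to be algebraic from its closure properties. -/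
def algebraicUnits (F L : Type*) [Field F] [Field L] [Algebra F L] : Subgroup Lˣ where
  carrier := {u | IsAlgebraic F (u : L)}
  one_mem' := isAlgebraic_one
  mul_mem' hu hv := hu.mul hv
  inv_mem' {u} hu := by simpa only [Set.mem_ofPred_eq, Units.val_inv_eq_inv_val] using hu.inv

lemma divHull_le_algebraicUnits {F : Type*} [Field F] [Algebra F K] {A : Set Kˣ}
    (hA : A ⊆ (algebraicUnits F K : Set Kˣ)) : divHull K A ≤ algebraicUnits F K := by
  rintro u ⟨k, hk, hu⟩
  have huk : IsAlgebraic F ((u ^ k : Kˣ) : K) := (Subgroup.closure_le _).mpr hA hu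
  rw [Units.val_pow_eq_pow_val] at huk
  exact huk.of_pow (Nat.pos_of_ne_zero hk)

lemma trdegOver_eq_of_isAlgebraic {F F' : Subfield K} (hFF' : F ≤ F')
    (halg : ∀ x ∈ F', IsAlgebraic F x) (s : Set K) : trdegOver K F s = trdegOver K F' s := by
  let _ : Algebra F F' := (Subfield.inclusion hFF').toAlgebra
  have : IsScalarTower F F' K := .of_algebraMap_eq fun _ => rfl
  have : Algebra.IsAlgebraic F F' :=
    ⟨fun x => (isAlgebraic_algebraMap_iff (algebraMap F' K).injective).mp (halg x x.2)⟩
  simp only [trdegOver, Algebra.IsAlgebraic.algebraicIndependent_iff F F']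

lemma subset_algebraicUnits_closure_unitSet (A : Set Kˣ) :
    A ⊆ (algebraicUnits (Subfield.closure (unitSet K A)) K : Set Kˣ) := fun u hu =>
  isAlgebraic_algebraMap
    (⟨u, Subfield.subset_closure ⟨u, hu, rfl⟩⟩ : Subfield.closure (unitSet K A))

lemma trdegRel_divHull_insert {A : Set Kˣ} {d : Kˣ}
    (hd : IsAlgebraic (Subfield.closure (unitSet K A)) (d : K)) {n : ℕ} (b : Fin n → Kˣ) :
    trdegRel K (divHull K (insert d A)) b = trdegRel K A b := by
  set F := Subfield.closure (unitSet K A)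
  have hunits : divHull K (insert d A) ≤ algebraicUnits F K :=
    divHull_le_algebraicUnits (Set.insert_subset hd (subset_algebraicUnits_closure_unitSet A))
  have hsub : A ⊆ divHull K (insert d A) := (Set.subset_insert d A).trans (subset_divHull _)
  have hclosure : Subfield.closure (unitSet K (divHull K (insert d A))) ≤
      (algebraicClosure F K).toSubfield := by
    rw [Subfield.closure_le]
    rintro _ ⟨u, hu, rfl⟩
    exact mem_algebraicClosure_iff.mpr (hunits hu)
  exact (trdegOver_eq_of_isAlgebraic (Subfield.closure_mono (Set.image_mono hsub))
    (fun _ hx => mem_algebraicClosure_iff.mp (hclosure hx)) _).symm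

end TranscendenceDegree

section Minimality

variable {K} {A : Set Kˣ} {n : ℕ} {b : Fin n → Kˣ} {m : Fin n → ℤ}

lemma ssubset_divHull_insert_prod_zpow (hb : relLattice K A b = ⊥) (hm : m ≠ 0) :
    A ⊂ divHull K (insert (∏ i, b i ^ m i) A) := by
  refine ⟨(Set.subset_insert _ A).trans (subset_divHull _), fun h => ?_⟩
  exact prod_zpow_notMem_divHull hb hm
    (subset_divHull A (h (subset_divHull _ (Set.mem_insert _ A))))

lemma divHull_insert_prod_zpow_lt (hb : relLattice K A b = ⊥) (hn : 2 ≤ n) (hm : m ≠ 0) :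
    divHull K (insert (∏ i, b i ^ m i) A) < divHull K (A ∪ Set.range b) := by
  have hrange (i : Fin n) : b i ∈ divHull K (A ∪ Set.range b) :=
    subset_divHull _ (Or.inr ⟨i, rfl⟩)
  obtain ⟨j, hmj⟩ := Function.ne_iff.mp hm
  have : Nontrivial (Fin n) := Fin.nontrivial_iff_two_le.mpr hn
  obtain ⟨i, hij⟩ := exists_ne j
  refine SetLike.lt_iff_le_and_exists.mpr
    ⟨divHull_le_iff.mpr (Set.insert_subset ?_ ?_), b i, hrange i,
      notMem_divHull_insert_prod_zpow hb hij.symm hmj⟩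
  · exact Subgroup.prod_mem _ fun i _ => Subgroup.zpow_mem _ (hrange i) _
  · exact Set.subset_union_left.trans (subset_divHull _)

lemma pdelta_le_pdelta_divHull_insert (hb : ldimRel K A b = n) {d : Kˣ}
    (hd : IsAlgebraic (Subfield.closure (unitSet K A)) (d : K)) :
    pdelta K A b ≤ pdelta K (divHull K (insert d A)) b := by
  have hldim : ldimRel K (divHull K (insert d A)) b ≤ ldimRel K A b :=
    (ldimRel_le _ b).trans_eq hb.symm
  rw [pdelta, pdelta, trdegRel_divHull_insert hd]
  gcongr

lemma MinPrealg.transcendental_prod_zpow (hb : MinPrealg K A b) (hm : m ≠ 0) :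
    Transcendental (Subfield.closure (unitSet K A)) ((∏ i, b i ^ m i : Kˣ) : K) := by
  obtain ⟨hn, hldim, hdelta, hmin⟩ := hb
  intro hd
  have hrel : relLattice K A b = ⊥ := relLattice_eq_bot_of_ldimRel_eq hldim
  have hlt := hmin _ (congrArg _ (divHull_divHull _).symm)
    (ssubset_divHull_insert_prod_zpow hrel hm) (divHull_insert_prod_zpow_lt hrel hn hm)
  exact (hdelta ▸ pdelta_le_pdelta_divHull_insert hldim hd).not_gt hlt

end Minimality

section Cosets

variable {K} {ι : Type} [Fintype ι]

lemma IsAlgSubgroup.self_mem_coset {H : Set (ι → Kˣ)} (hH : IsAlgSubgroup K H) (c : ι → Kˣ) :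
    c ∈ coset K c H := by
  obtain ⟨k, M, rfl⟩ := hH
  exact ⟨1, by ext; simp [mpow], mul_one c⟩

lemma IsAlgSubgroup.exists_prod_zpow_eq_of_mem_coset {H : Set (ι → Kˣ)}
    (hH : IsAlgSubgroup K H) (hne : H ≠ Set.univ) :
    ∃ m : ι → ℤ, m ≠ 0 ∧ ∀ c, ∀ x ∈ coset K c H, ∏ i, x i ^ m i = ∏ i, c i ^ m i := by
  obtain ⟨k, M, rfl⟩ := hH
  obtain ⟨y, hy⟩ := (Set.ne_univ_iff_exists_notMem _).mp hne
  obtain ⟨j, hj⟩ := Function.ne_iff.mp hy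
  refine ⟨M j, fun hMj => hj (by simp [mpow, hMj]), ?_⟩
  rintro c _ ⟨t, ht, rfl⟩
  have htj : ∏ i, t i ^ M j i = 1 := congrFun ht j
  simp only [Pi.mul_apply, mul_zpow, Finset.prod_mul_distrib, htj, mul_one]

lemma MinPrealg.notMem_coset_of_mem_coset {A : Set Kˣ} {n : ℕ} {b : Fin n → Kˣ}
    (hb : MinPrealg K A b) {H : Set (Fin n → Kˣ)} (hH : IsAlgSubgroup K H) (hne : H ≠ Set.univ)
    {c e : Fin n → Kˣ} (he : ∀ i, IsAlgebraic (Subfield.closure (unitSet K A)) (e i : K))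
    (hec : e ∈ coset K c H) : b ∉ coset K c H := by
  intro hbc
  obtain ⟨m, hm, heq⟩ := hH.exists_prod_zpow_eq_of_mem_coset hne
  refine hb.transcendental_prod_zpow hm ?_
  rw [heq c b hbc, ← heq c e hec]
  exact Subgroup.prod_mem (algebraicUnits _ K) fun i _ => Subgroup.zpow_mem _ (he i) _

end Cosets

section Locus

open MvPolynomial
variable {K}

lemma exists_ne_zero_specialization {k L Ω σ : Type*} [Field k] [Field L] [Algebra k L]
    [Field Ω] [IsAlgClosed Ω] [Algebra k Ω] [Finite σ] {b : σ → L} (hb : ∀ i, b i ≠ 0) :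
    ∃ e : σ → Ω, (∀ i, e i ≠ 0) ∧
      ∀ p : MvPolynomial σ k, aeval b p = 0 → aeval e p = 0 := by
  by_contra! hcon
  have := Fintype.ofFinite σ
  set P := vanishingIdeal k {b}
  have hprod : ∏ i, X i ∈ vanishingIdeal k (zeroLocus Ω P) := by
    intro e he
    obtain ⟨i, hi⟩ : ∃ i, e i = 0 := by
      by_contra! hne
      obtain ⟨p, hpb, hpe⟩ := hcon e hne
      exact hpe (he p ((mem_vanishingIdeal_singleton_iff b p).mpr hpb))
    rw [map_prod, Finset.prod_eq_zero (Finset.mem_univ i) (by rw [aeval_X, hi])]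
  rw [IsPrime.vanishingIdeal_zeroLocus,
    mem_vanishingIdeal_singleton_iff, map_prod] at hprod
  simp only [aeval_X] at hprod
  exact Finset.prod_ne_zero_iff.mpr (fun i _ => hb i) hprod

lemma self_mem_locusOver {ι : Type} (E : Set K) (b : ι → Kˣ) : b ∈ locusOver K E b :=
  fun _ hC => hC.2

lemma exists_mem_locusOver_isAlgebraic [IsAlgClosed K] {ι : Type} [Finite ι] (F : Subfield K)
    (b : ι → Kˣ) :
    ∃ e ∈ locusOver K {x : K | IsAlgebraic F x} b, ∀ i, IsAlgebraic F (e i : K) := by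
  let E := algebraicClosure F K
  have : IsAlgClosed E := IsAlgClosure.isAlgClosed F
  obtain ⟨e, he, hspec⟩ := exists_ne_zero_specialization (k := E) (Ω := E) fun i => (b i).ne_zero
  have he' (i : ι) : (e i : K) ≠ 0 := fun h => he i (Subtype.ext h)
  refine ⟨fun i => Units.mk0 (e i) (he' i), ?_, fun i => mem_algebraicClosure_iff.mp (e i).2⟩
  rintro _ ⟨⟨S, hS, rfl⟩, hb⟩ p hp
  obtain ⟨q, rfl⟩ : p ∈ Set.range (map (algebraMap E K)) := by
    refine mem_range_map_iff_coeffs_subset.mpr fun c hc => ?_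
    obtain ⟨t, -, rfl⟩ := mem_coeffs_iff.mp hc
    exact ⟨⟨_, mem_algebraicClosure_iff.mpr (hS p hp t)⟩, rfl⟩
  have hbq : aeval (fun i => (b i : K)) q = 0 := by
    rw [aeval_def, ← eval_map]
    exact hb _ hp
  have heq : aeval (fun i => algebraMap E K (e i)) q = 0 :=
    (aeval_algebraMap_apply K e q).trans (by rw [hspec q hbq, map_zero])
  rwa [eval_map, ← aeval_def]

end Locus

theorem minPrealg_locus_free_general
    (K : Type) [Field K] [IsAlgClosed K]
    (A : Set Kˣ) {n : ℕ} (b : Fin n → Kˣ) (hb : MinPrealg K A b)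
    (H : Set (Fin n → Kˣ)) (c : Fin n → Kˣ) (hH : IsAlgSubgroup K H) (hne : H ≠ Set.univ) :
    ((∀ i, IsAlgebraic (Subfield.closure (unitSet K A)) (c i : K)) → b ∉ coset K c H) ∧
    ¬ locusOver K {x : K | IsAlgebraic (Subfield.closure (unitSet K A)) x} b ⊆ coset K c H := by
  refine ⟨fun hc => hb.notMem_coset_of_mem_coset hH hne hc (hH.self_mem_coset c), fun hsub => ?_⟩
  obtain ⟨e, he, halg⟩ := exists_mem_locusOver_isAlgebraic (Subfield.closure (unitSet K A)) b
  exact hb.notMem_coset_of_mem_coset hH hne halg (hsub he) (hsub (self_mem_locusOver _ b))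

/-- A tuple realising a minimal prealgebraic extension of `A = ⟨A⟩` lies in
no coset `c·T` of a proper subtorus with `c` algebraic over `ℚ(A)`; in particular its locus
over the algebraic closure of `ℚ(A)` is a free variety. -/
theorem minPrealg_locus_free
    (K : Type) [Field K] [IsAlgClosed K] [CharZero K]
    (A : Set Kˣ) (hA : A = ↑(divHull K A))
    {n : ℕ} (b : Fin n → Kˣ) (hb : MinPrealg K A b) :
    (∀ (T : Set (Fin n → Kˣ)) (c : Fin n → Kˣ),
      IsSubtorus K T → T ≠ Set.univ →
      (∀ i, IsAlgebraic (↥(Subfield.closure (unitSet K A))) ((c i : Kˣ) : K)) →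
      b ∉ coset K c T) ∧
    IsFree K (locusOver K
      {x : K | IsAlgebraic (↥(Subfield.closure (unitSet K A))) x} b) := by
  exact ⟨fun T c hT hne => (minPrealg_locus_free_general K A b hb T c hT.1 hne).1,
    fun ⟨T, c, hT, hne, hsub⟩ => (minPrealg_locus_free_general K A b hb T c hT.1 hne).2 hsub⟩

end BadFields
end

section
/- Let K be an algebraically closed field of characteristic 0, let F ⊆ K be an algebraically closed subfield, and let V ⊆ (Kˣ)ⁿ be a Kummer generic irreducible variety defined over F. For i = 1, 2, let (a_{i,m})_{m ≥ 1} be a sequence of n-tuples from Kˣ such that a_{i,1} is a generic point of V over F (i.e., a_{i,1} ∈ V and trdeg(F(a_{i,1})/F) = dim V) and such that (a_{i,mk})^k = a_{i,m} componentwise for all m, k ≥ 1. Then there is a field isomorphism over F from F(a_{1,m} : m ≥ 1) onto F(a_{2,m} : m ≥ 1) sending a_{1,m} to a_{2,m} componentwise for every m ≥ 1. -/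
namespace BadFields

variable (K : Type) [Field K]

/-- The field generated by an algebraically closed subfield `F` and a compatible system of
roots `a m`, `m ≥ 1`. -/
def rootsField (K : Type) [Field K] (F : Subfield K) {n : ℕ} (a : ℕ → Fin n → Kˣ) :
    Subfield K :=
  Subfield.closure (↑F ∪ ⋃ m ∈ {m : ℕ | 1 ≤ m}, Set.range fun j => ((a m j : Kˣ) : K))

/-!
A point of an irreducible variety over `F` whose transcendence degree is the dimension satisfies no
polynomial relations over `F` beyond those of the variety: otherwise the prime ideal of the variety
would extend a maximal chain of primes above the ideal of the point to a chain that is too long.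
If `a ^ m` is generic in a Kummer generic `V`, then the ideal of `a` contains the prime ideal of
`√[m]{V}`, and both contract to the ideal of `V` along the integral map `X i ↦ X i ^ m`; by
incomparability they are equal. A relation between roots of several levels is a relation between
the roots of one common level, so two root systems satisfy the same relations over `F`, and
therefore generate isomorphic fields.
-/

section

open MvPolynomial

section PrimeIdeals

theorem ringKrullDim_le_of_isIntegral (R S : Type*) [CommRing R] [CommRing S] [Algebra R S]
    [Algebra.IsIntegral R S] [FaithfulSMul R S] : ringKrullDim R ≤ ringKrullDim S := by
  refine iSup_le fun l => ?_
  obtain ⟨Q, hQ⟩ := Algebra.IsIntegral.comap_surjective R S l.head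
  have : Q.asIdeal.LiesOver l.head.asIdeal := ⟨congrArg PrimeSpectrum.asIdeal hQ.symm⟩
  obtain ⟨L, hL, -⟩ := Ideal.exists_ltSeries_of_hasGoingUp l Q.asIdeal
  exact hL ▸ Order.LTSeries.length_le_krullDim L

theorem card_le_ringKrullDim_of_algebraicIndependent {k R ι : Type*} [Field k] [CommRing R]
    [IsDomain R] [Algebra k R] [Algebra.FiniteType k R] [Finite ι] {x : ι → R}
    (hx : AlgebraicIndependent k x) : (Nat.card ι : WithBot ℕ∞) ≤ ringKrullDim R := by
  obtain ⟨s, g, hinj, hint⟩ := exists_integral_inj_algHom_of_fg k R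
  algebraize [g.toRingHom]
  have : FaithfulSMul (MvPolynomial (Fin s) k) R :=
    (faithfulSMul_iff_algebraMap_injective _ _).mpr hinj
  have htrdeg : Algebra.trdeg k R = s := by
    simpa [trdeg_eq_zero, eq_comm] using
      lift_trdeg_add_eq k (MvPolynomial (Fin s) k) R
  have hcard : Nat.card ι ≤ s := by
    have := Fintype.ofFinite ι
    simpa [htrdeg] using hx.lift_cardinalMk_le_trdeg
  calc (Nat.card ι : WithBot ℕ∞) ≤ s := by exact_mod_cast hcard
    _ = ringKrullDim (MvPolynomial (Fin s) k) := by simp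
    _ ≤ ringKrullDim R := ringKrullDim_le_of_isIntegral _ _

/-- Localizing at `s` turns a chain in `(R ⧸ P)[1/s]` into a chain above `P` avoiding `s`. -/
theorem exists_ltSeries_of_algebraicIndependent_quotient {k R ι : Type*} [Field k] [CommRing R]
    [Algebra k R] [Algebra.FiniteType k R] [Finite ι] (P : Ideal R) [P.IsPrime] {s : R}
    (hs : s ∉ P) {x : ι → R}
    (hx : AlgebraicIndependent k fun i => (Ideal.Quotient.mk P (x i) : R ⧸ P)) :
    ∃ l : LTSeries (PrimeSpectrum R),
      l.length = Nat.card ι ∧ P ≤ l.head.asIdeal ∧ s ∉ l.last.asIdeal := by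
  let sbar : R ⧸ P := Ideal.Quotient.mk P s
  let L := Localization.Away sbar
  have hpow : Submonoid.powers sbar ≤ nonZeroDivisors (R ⧸ P) :=
    powers_le_nonZeroDivisors_of_noZeroDivisors (mt Ideal.Quotient.eq_zero_iff_mem.mp hs)
  have : IsDomain L := IsLocalization.isDomain_localization hpow
  have : Algebra.FiniteType (R ⧸ P) L :=
    IsLocalization.finiteType_of_monoid_fg (Submonoid.powers sbar) L
  have : Algebra.FiniteType k L := .trans (S := R ⧸ P) inferInstance inferInstance
  have hxL : AlgebraicIndependent k fun i => algebraMap (R ⧸ P) L (Ideal.Quotient.mk P (x i)) :=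
    hx.map' (f := IsScalarTower.toAlgHom k (R ⧸ P) L) (IsLocalization.injective L hpow)
  obtain ⟨l, hl⟩ := Order.le_krullDim_iff.mp (card_le_ringKrullDim_of_algebraicIndependent hxL)
  let φ : R →+* L := (algebraMap (R ⧸ P) L).comp (Ideal.Quotient.mk P)
  have hφ : Function.Injective (PrimeSpectrum.comap φ) :=
    (PrimeSpectrum.comap_injective_of_surjective (Ideal.Quotient.mk P)
      Ideal.Quotient.mk_surjective).comp
      (PrimeSpectrum.localization_comap_injective L (Submonoid.powers sbar))
  have hmono : Monotone (PrimeSpectrum.comap φ) := fun _ _ h => Ideal.comap_mono h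
  refine ⟨l.map _ (hmono.strictMono_of_injective hφ), hl, fun p hp => ?_, fun hslast => ?_⟩
  · rw [LTSeries.head_map]
    have hφp : φ p = 0 := by simp [φ, Ideal.Quotient.eq_zero_iff_mem.mpr hp]
    exact Ideal.mem_comap.mpr (hφp ▸ Ideal.zero_mem _)
  · rw [LTSeries.last_map] at hslast
    exact l.last.isPrime.ne_top
      (Ideal.eq_top_of_isUnit_mem _ hslast (IsLocalization.Away.algebraMap_isUnit sbar))

theorem exists_ltSeries_comap_eq_of_faithfullyFlat {A B : Type*} [CommRing A] [CommRing B]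
    [Algebra A B] [Module.FaithfullyFlat A B] (l : LTSeries (PrimeSpectrum A)) :
    ∃ L : LTSeries (PrimeSpectrum B), L.length = l.length ∧
      PrimeSpectrum.comap (algebraMap A B) L.head = l.head ∧
      PrimeSpectrum.comap (algebraMap A B) L.last = l.last := by
  obtain ⟨Q, hQ⟩ := PrimeSpectrum.comap_surjective_of_faithfullyFlat (B := B) l.last
  have : Q.asIdeal.LiesOver l.last.asIdeal := ⟨congrArg PrimeSpectrum.asIdeal hQ.symm⟩
  obtain ⟨L, hlength, hlast, hmap⟩ := Ideal.exists_ltSeries_of_hasGoingDown l Q.asIdeal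
  refine ⟨L, hlength, ?_, hlast ▸ hQ⟩
  simpa [RelSeries.toList, RelSeries.head] using congrArg List.head? hmap

attribute [local instance] MvPolynomial.algebraMvPolynomial in
theorem faithfullyFlat_mvPolynomial (k L ι : Type*) [Field k] [Field L] [Algebra k L] :
    Module.FaithfullyFlat (MvPolynomial ι k) (MvPolynomial ι L) :=
  have : Module.Free (MvPolynomial ι k) (MvPolynomial ι L) := .of_equiv
    (Algebra.IsPushout.equiv k (MvPolynomial ι k) L (MvPolynomial ι L)).toLinearEquiv
  inferInstance

theorem isIntegral_expand (R σ : Type*) [CommRing R] {m : ℕ} (hm : m ≠ 0) :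
    (expand (σ := σ) (R := R) m).toRingHom.IsIntegral := by
  intro f
  induction f using MvPolynomial.induction_on with
  | C r => simpa using (expand (σ := σ) (R := R) m).toRingHom.isIntegralElem_map (x := C r)
  | add p q hp hq => exact hp.add _ hq
  | mul_X p i hp =>
    exact hp.mul _ ⟨Polynomial.X ^ m - Polynomial.C (X i), Polynomial.monic_X_pow_sub_C _ hm,
      by simp⟩

theorem comap_lt_comap_of_isIntegral {R S : Type*} [CommRing R] [CommRing S] {f : R →+* S}
    (hf : f.IsIntegral) {P Q : Ideal S} [P.IsPrime] (hlt : P < Q) : P.comap f < Q.comap f := by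
  algebraize [f]
  exact Ideal.IsIntegral.comap_lt_comap hlt

end PrimeIdeals

section AdjoinRange

theorem exists_algEquiv_of_ker_eq {k A B C : Type*} [CommRing k] [CommRing A] [CommRing B]
    [CommRing C] [Algebra k A] [Algebra k B] [Algebra k C] {f : A →ₐ[k] B} {g : A →ₐ[k] C}
    (hf : Function.Surjective f) (hg : Function.Surjective g)
    (hker : RingHom.ker f = RingHom.ker g) : ∃ σ : B ≃ₐ[k] C, ∀ a, σ (f a) = g a := by
  let ef := Ideal.quotientKerAlgEquivOfSurjective hf
  let eg := Ideal.quotientKerAlgEquivOfSurjective hg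
  refine ⟨(ef.symm.trans (Ideal.quotientEquivAlgOfEq k hker)).trans eg, fun a => ?_⟩
  have hef : ef.symm (f a) = Ideal.Quotient.mk _ a := ef.symm_apply_eq.mpr rfl
  simp only [AlgEquiv.trans_apply, hef]
  rfl

theorem exists_algEquiv_algebraAdjoin_range {k A B I : Type*} [CommRing k] [CommRing A]
    [CommRing B] [Algebra k A] [Algebra k B] {e₁ : I → A} {e₂ : I → B}
    (hker : RingHom.ker (aeval (R := k) e₁) = RingHom.ker (aeval (R := k) e₂)) :
    ∃ τ : Algebra.adjoin k (Set.range e₁) ≃ₐ[k] Algebra.adjoin k (Set.range e₂),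
      ∀ i (x : Algebra.adjoin k (Set.range e₁)), (x : A) = e₁ i → (τ x : B) = e₂ i := by
  rw [Algebra.adjoin_range_eq_range_aeval, Algebra.adjoin_range_eq_range_aeval]
  obtain ⟨τ, hτ⟩ := exists_algEquiv_of_ker_eq (aeval (R := k) e₁).rangeRestrict_surjective
    (aeval (R := k) e₂).rangeRestrict_surjective (by simpa only [AlgHom.ker_rangeRestrict])
  refine ⟨τ, fun i x hx => ?_⟩
  have hX : x = (aeval (R := k) e₁).rangeRestrict (X i) :=
    Subtype.ext (hx.trans (aeval_X e₁ i).symm)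
  rw [hX, hτ]
  exact aeval_X e₂ i

open IntermediateField
open scoped IntermediateField.algebraAdjoinAdjoin

theorem exists_algEquiv_adjoin_range {k L₁ L₂ I : Type*} [Field k] [Field L₁] [Field L₂]
    [Algebra k L₁] [Algebra k L₂] {e₁ : I → L₁} {e₂ : I → L₂}
    (hker : RingHom.ker (aeval (R := k) e₁) = RingHom.ker (aeval (R := k) e₂)) :
    ∃ σ : adjoin k (Set.range e₁) ≃ₐ[k] adjoin k (Set.range e₂),
      ∀ i (x : adjoin k (Set.range e₁)), (x : L₁) = e₁ i → (σ x : L₂) = e₂ i := by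
  obtain ⟨τ, hτ⟩ := exists_algEquiv_algebraAdjoin_range hker
  refine ⟨IsFractionRing.fieldEquivOfAlgEquiv k _ _ τ, fun i x hx => ?_⟩
  let y : Algebra.adjoin k (Set.range e₁) := ⟨e₁ i, Algebra.subset_adjoin ⟨i, rfl⟩⟩
  have hxy : x = algebraMap _ (adjoin k (Set.range e₁)) y := Subtype.ext hx
  rw [hxy, IsFractionRing.fieldEquivOfAlgEquiv_algebraMap]
  exact hτ i y rfl

end AdjoinRange

section TorusZeroLocus

variable {K} {k : Type*} [Field k] [Algebra k K] {ι : Type}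

/-- The subset of the torus `(Kˣ)^ι` cut out by a set of polynomials over a subfield `k` of `K`.
It is `zeroSet` when `k = K`; the smaller fields are needed for varieties defined over them. -/
def torusZeroLocus (K : Type) [Field K] [Algebra k K] (S : Set (MvPolynomial ι k)) :
    Set (ι → Kˣ) :=
  {x | ∀ p ∈ S, aeval (fun i => (x i : K)) p = 0}

/-- The ideal of all polynomials over `k` vanishing on a subset of the torus `(Kˣ)^ι`.
For a single point it consists of the algebraic relations over `k` between its coordinates. -/
def torusVanishingIdeal (k : Type*) [Field k] [Algebra k K] (W : Set (ι → Kˣ)) :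
    Ideal (MvPolynomial ι k) :=
  vanishingIdeal k ((fun x i => (x i : K)) '' W)

theorem mem_torusVanishingIdeal {W : Set (ι → Kˣ)} {p : MvPolynomial ι k} :
    p ∈ torusVanishingIdeal k W ↔ ∀ x ∈ W, aeval (fun i => (x i : K)) p = 0 :=
  Set.forall_mem_image

theorem mem_torusVanishingIdeal_singleton {a : ι → Kˣ} {p : MvPolynomial ι k} :
    p ∈ torusVanishingIdeal k {a} ↔ aeval (fun i => (a i : K)) p = 0 := by
  simp [mem_torusVanishingIdeal]

theorem torusVanishingIdeal_singleton (a : ι → Kˣ) :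
    torusVanishingIdeal k {a} = RingHom.ker (aeval (R := k) fun i => (a i : K)) :=
  Ideal.ext fun _ => mem_torusVanishingIdeal_singleton

theorem subset_torusZeroLocus_iff {W : Set (ι → Kˣ)} {S : Set (MvPolynomial ι k)} :
    W ⊆ torusZeroLocus K S ↔ S ⊆ torusVanishingIdeal k W :=
  ⟨fun h _ hp => mem_torusVanishingIdeal.mpr fun _ hx => h hx _ hp,
    fun h _ hx _ hp => mem_torusVanishingIdeal.mp (h hp) _ hx⟩

theorem torusVanishingIdeal_anti {W W' : Set (ι → Kˣ)} (h : W ⊆ W') :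
    torusVanishingIdeal k W' ≤ torusVanishingIdeal k W :=
  fun _ hp => mem_torusVanishingIdeal.mpr fun _ hx => mem_torusVanishingIdeal.mp hp _ (h hx)

theorem torusZeroLocus_anti {S S' : Set (MvPolynomial ι k)} (h : S ⊆ S') :
    torusZeroLocus K S' ⊆ torusZeroLocus K S :=
  fun _ hx _ hp => hx _ (h hp)

theorem torusZeroLocus_torusVanishingIdeal_torusZeroLocus (S : Set (MvPolynomial ι k)) :
    torusZeroLocus K (torusVanishingIdeal k (torusZeroLocus K S) : Set (MvPolynomial ι k)) =
      torusZeroLocus K S :=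
  (torusZeroLocus_anti (subset_torusZeroLocus_iff.mp subset_rfl)).antisymm
    (subset_torusZeroLocus_iff.mpr subset_rfl)

theorem zeroSet_eq_torusZeroLocus (S : Set (MvPolynomial ι K)) :
    zeroSet K S = torusZeroLocus K S :=
  rfl

theorem zeroSet_image_map (S : Set (MvPolynomial ι k)) :
    zeroSet K (map (algebraMap k K) '' S) = torusZeroLocus K S := by
  ext x
  simp [zeroSet, torusZeroLocus, eval_map, aeval_def]

theorem isZClosed_torusZeroLocus (S : Set (MvPolynomial ι k)) : IsZClosed K (torusZeroLocus K S) :=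
  ⟨_, (zeroSet_image_map S).symm⟩

theorem IsZClosed.torusZeroLocus_torusVanishingIdeal {V : Set (ι → Kˣ)} (hV : IsZClosed K V) :
    torusZeroLocus K (torusVanishingIdeal K V : Set (MvPolynomial ι K)) = V := by
  obtain ⟨S, rfl⟩ := hV
  exact torusZeroLocus_torusVanishingIdeal_torusZeroLocus S

theorem IsClosedOver.torusZeroLocus_torusVanishingIdeal {F : Subfield K} {V : Set (ι → Kˣ)}
    (hV : IsClosedOver K F V) :
    torusZeroLocus K (torusVanishingIdeal F V : Set (MvPolynomial ι F)) = V := by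
  obtain ⟨S, hS, rfl⟩ := hV
  have hlift : S ⊆ Set.range (map (algebraMap F K)) := fun p hp =>
    mem_range_map_iff_coeffs_subset.mpr fun c hc => by
      obtain ⟨m, -, rfl⟩ := mem_coeffs_iff.mp hc
      exact ⟨⟨_, hS p hp m⟩, rfl⟩
  obtain ⟨S, rfl⟩ := Set.subset_range_iff_exists_image_eq.mp hlift
  rw [zeroSet_image_map, torusZeroLocus_torusVanishingIdeal_torusZeroLocus]

theorem IsIrredVar.isPrime_torusVanishingIdeal (k : Type*) [Field k] [Algebra k K]
    {V : Set (ι → Kˣ)} (hV : IsIrredVar K V) : (torusVanishingIdeal k V).IsPrime := by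
  obtain ⟨-, ⟨x, hx⟩, hirred⟩ := hV
  refine Ideal.isPrime_iff.mpr ⟨fun htop => ?_, fun {p q} hpq => ?_⟩
  · have h1 : (1 : MvPolynomial ι k) ∈ torusVanishingIdeal k V := htop ▸ Submodule.mem_top
    simpa using mem_torusVanishingIdeal.mp h1 x hx
  · have hcover : V ⊆ torusZeroLocus K {p} ∪ torusZeroLocus K {q} := fun y hy => by
      simpa [torusZeroLocus] using mem_torusVanishingIdeal.mp hpq y hy
    exact (hirred _ _ (isZClosed_torusZeroLocus _) (isZClosed_torusZeroLocus _) hcover).imp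
      (fun h => subset_torusZeroLocus_iff.mp h (Set.mem_singleton p))
      fun h => subset_torusZeroLocus_iff.mp h (Set.mem_singleton q)

theorem IsZClosed.isIrredVar_of_isPrime {V : Set (ι → Kˣ)} (hV : IsZClosed K V)
    (hprime : (torusVanishingIdeal K V).IsPrime) : IsIrredVar K V := by
  refine ⟨hV, Set.nonempty_iff_ne_empty.mpr fun hempty => hprime.ne_top ?_, ?_⟩
  · exact (Ideal.eq_top_iff_one _).mpr (mem_torusVanishingIdeal.mpr (by simp [hempty]))
  · rintro _ _ ⟨S, rfl⟩ ⟨T, rfl⟩ hcover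
    by_contra! hcon
    simp only [zeroSet_eq_torusZeroLocus, subset_torusZeroLocus_iff, Set.not_subset] at hcon
    obtain ⟨⟨p, hpS, hp⟩, q, hqT, hq⟩ := hcon
    refine (hprime.mem_or_mem (x := p) (y := q) (mem_torusVanishingIdeal.mpr fun x hx => ?_)).elim
      hp hq
    rw [map_mul]
    rcases hcover hx with h | h
    · exact mul_eq_zero_of_left (h p hpS) _
    · exact mul_eq_zero_of_right _ (h q hqT)

/-- Multiplying by `∏ i, X i` kills the points of affine space outside the torus, which reduces
the statement to the affine Nullstellensatz. -/
theorem torusVanishingIdeal_torusZeroLocus_of_isPrime [IsAlgClosed K] [Fintype ι]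
    {q : Ideal (MvPolynomial ι K)} [q.IsPrime] (hX : ∏ i, X i ∉ q) :
    torusVanishingIdeal K (torusZeroLocus K (q : Set (MvPolynomial ι K))) = q := by
  refine le_antisymm (fun f hf => ?_) (subset_torusZeroLocus_iff.mp subset_rfl)
  have hfX : f * ∏ i, X i ∈ vanishingIdeal K (zeroLocus K q) := fun x hx => by
    rw [map_mul, map_prod]
    simp only [aeval_X]
    by_cases h0 : ∃ i, x i = 0
    · obtain ⟨i, hi⟩ := h0
      rw [Finset.prod_eq_zero (Finset.mem_univ i) hi, mul_zero]
    · push Not at h0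
      have hfx : aeval x f = 0 := mem_torusVanishingIdeal.mp hf (fun i => Units.mk0 (x i) (h0 i)) hx
      rw [hfx, zero_mul]
  rw [IsPrime.vanishingIdeal_zeroLocus] at hfX
  exact (Ideal.IsPrime.mem_or_mem inferInstance hfX).resolve_right hX

theorem isIrredVar_torusZeroLocus [IsAlgClosed K] [Fintype ι] {q : Ideal (MvPolynomial ι K)}
    [hq : q.IsPrime] (hX : ∏ i, X i ∉ q) :
    IsIrredVar K (torusZeroLocus K (q : Set (MvPolynomial ι K))) :=
  (isZClosed_torusZeroLocus _).isIrredVar_of_isPrime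
    ((torusVanishingIdeal_torusZeroLocus_of_isPrime hX).symm ▸ hq)

end TorusZeroLocus

section Dimension

variable {K} {ι : Type}

theorem le_card_of_strictMono_isIrredVar [Finite ι] {d : ℕ} {W : Fin (d + 1) → Set (ι → Kˣ)}
    (hW : ∀ i, IsIrredVar K (W i)) (hmono : StrictMono W) : d ≤ Nat.card ι := by
  let l : LTSeries (PrimeSpectrum (MvPolynomial ι K)) :=
    { length := d
      toFun := fun i => ⟨torusVanishingIdeal K (W i.rev), (hW _).isPrime_torusVanishingIdeal K⟩
      step := fun i => by
        have hlt : W i.succ.rev < W i.castSucc.rev :=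
          hmono (Fin.rev_lt_rev.mpr i.castSucc_lt_succ)
        refine (torusVanishingIdeal_anti hlt.le).lt_of_not_ge fun hge => hlt.not_ge ?_
        have h := torusZeroLocus_anti (K := K) hge
        rwa [(hW _).1.torusZeroLocus_torusVanishingIdeal,
          (hW _).1.torusZeroLocus_torusVanishingIdeal] at h }
  have hl : (d : WithBot ℕ∞) ≤ ringKrullDim (MvPolynomial ι K) :=
    Order.LTSeries.length_le_krullDim l
  simpa using hl

theorem le_vdim_of_strictMono [Finite ι] {V : Set (ι → Kˣ)} {d : ℕ}
    {W : Fin (d + 1) → Set (ι → Kˣ)} (hW : ∀ i, IsIrredVar K (W i) ∧ W i ⊆ V)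
    (hmono : StrictMono W) : d ≤ vdim K V :=
  le_csSup ⟨Nat.card ι, fun _ ⟨_, hW, hmono⟩ =>
    le_card_of_strictMono_isIrredVar (fun i => (hW i).1) hmono⟩ ⟨W, hW, hmono⟩

theorem length_le_vdim_self [IsAlgClosed K] [Fintype ι] {V : Set (ι → Kˣ)}
    (L : LTSeries (PrimeSpectrum (MvPolynomial ι K))) (hX : ∏ i, X i ∉ L.last.asIdeal)
    (hV : torusZeroLocus K (L.head.asIdeal : Set (MvPolynomial ι K)) ⊆ V) :
    L.length ≤ vdim K V := by
  have hXL (i) : ∏ i, X i ∉ (L i).asIdeal := fun h => hX (L.monotone (Fin.le_last i) h)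
  refine le_vdim_of_strictMono
    (W := fun i => torusZeroLocus K ((L i.rev).asIdeal : Set (MvPolynomial ι K)))
    (fun i => ⟨isIrredVar_torusZeroLocus (hXL _),
      (torusZeroLocus_anti (L.monotone (Fin.zero_le _))).trans hV⟩) fun i j hij => ?_
  have hlt : L j.rev < L i.rev := L.strictMono (Fin.rev_lt_rev.mpr hij)
  refine (torusZeroLocus_anti hlt.le).lt_of_not_ge fun hge => hlt.not_ge ?_
  have h := torusVanishingIdeal_anti (k := K) hge
  rwa [torusVanishingIdeal_torusZeroLocus_of_isPrime (hXL _),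
    torusVanishingIdeal_torusZeroLocus_of_isPrime (hXL _)] at h

theorem exists_algebraicIndependent_card_eq_trdegOver (F : Subfield K) {s : Set K}
    (hs : s.Finite) : ∃ t : Finset K, ↑t ⊆ s ∧ t.card = trdegOver K F s ∧
      AlgebraicIndependent F (fun x : {y : K // y ∈ t} => (x : K)) := by
  refine Nat.sSup_mem (s := {d | ∃ t : Finset K, ↑t ⊆ s ∧ t.card = d ∧
    AlgebraicIndependent F (fun x : {y : K // y ∈ t} => (x : K))}) ?_ ⟨hs.toFinset.card, ?_⟩
  · exact ⟨0, ∅, by simp, rfl,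
      algebraicIndependent_empty_type_iff.mpr (algebraMap F K).injective⟩
  · rintro _ ⟨t, ht, rfl, -⟩
    exact Finset.card_le_card fun x hx => hs.mem_toFinset.mpr (ht hx)

theorem exists_ltSeries_length_eq_trdegOver [Fintype ι] (F : Subfield K) (a : ι → Kˣ) :
    ∃ l : LTSeries (PrimeSpectrum (MvPolynomial ι F)),
      l.length = trdegOver K F (Set.range fun i => (a i : K)) ∧
      torusVanishingIdeal F {a} ≤ l.head.asIdeal ∧ ∏ i, X i ∉ l.last.asIdeal := by
  obtain ⟨t, ht, hcard, hind⟩ := exists_algebraicIndependent_card_eq_trdegOver F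
    (Set.finite_range fun i => (a i : K))
  choose v hv using fun x : {y // y ∈ t} => ht x.2
  have hX : ∏ i, X i ∉ torusVanishingIdeal F {a} := by
    simp [mem_torusVanishingIdeal_singleton, Finset.prod_eq_zero_iff]
  have hP := torusVanishingIdeal_singleton (k := F) a
  have : (torusVanishingIdeal F {a}).IsPrime := hP ▸ RingHom.ker_isPrime _
  let φ : MvPolynomial ι F ⧸ torusVanishingIdeal F {a} →ₐ[F] K :=
    Ideal.Quotient.liftₐ _ (aeval fun i => (a i : K)) fun _ => mem_torusVanishingIdeal_singleton.mp
  have hφ (x) : φ (Ideal.Quotient.mk _ (X (v x))) = x := (aeval_X _ _).trans (hv x)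
  have hindP : AlgebraicIndependent F fun x =>
      (Ideal.Quotient.mk (torusVanishingIdeal F {a}) (X (v x))) :=
    AlgebraicIndependent.of_comp φ (by simpa only [Function.comp_def, hφ] using hind)
  obtain ⟨l, hl, hhead, hlast⟩ := exists_ltSeries_of_algebraicIndependent_quotient _ hX hindP
  exact ⟨l, by simpa [hcard] using hl, hhead, hlast⟩

attribute [local instance] MvPolynomial.algebraMvPolynomial in
theorem length_le_vdim [IsAlgClosed K] [Fintype ι] {k : Type*} [Field k]
    [Algebra k K] {V : Set (ι → Kˣ)} (l : LTSeries (PrimeSpectrum (MvPolynomial ι k)))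
    (hX : ∏ i, X i ∉ l.last.asIdeal)
    (hV : torusZeroLocus K (l.head.asIdeal : Set (MvPolynomial ι k)) ⊆ V) :
    l.length ≤ vdim K V := by
  have := faithfullyFlat_mvPolynomial k K ι
  obtain ⟨L, hlength, hhead, hlast⟩ :=
    exists_ltSeries_comap_eq_of_faithfullyFlat (B := MvPolynomial ι K) l
  rw [← hlength]
  refine length_le_vdim_self L (fun h => hX ?_) fun x hx => hV fun p hp => ?_
  · rw [← hlast, PrimeSpectrum.comap_asIdeal, Ideal.mem_comap, algebraMap_def, map_prod]
    simpa only [map_X] using h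
  · rw [SetLike.mem_coe, ← hhead, PrimeSpectrum.comap_asIdeal, Ideal.mem_comap,
      algebraMap_def] at hp
    exact (aeval_map_algebraMap K _ p).symm.trans (hx _ hp)

theorem trdegOver_lt_vdim [IsAlgClosed K] [Finite ι] {F : Subfield K} {V : Set (ι → Kˣ)}
    {a : ι → Kˣ} {P : Ideal (MvPolynomial ι F)} [hP : P.IsPrime]
    (hlt : P < torusVanishingIdeal F {a})
    (hV : torusZeroLocus K (P : Set (MvPolynomial ι F)) ⊆ V) :
    trdegOver K F (Set.range fun i => (a i : K)) < vdim K V := by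
  have := Fintype.ofFinite ι
  obtain ⟨l, hl, hhead, hlast⟩ := exists_ltSeries_length_eq_trdegOver F a
  have hcons : (⟨P, hP⟩ : PrimeSpectrum (MvPolynomial ι F)) < l.head := hlt.trans_le hhead
  have h := length_le_vdim (l.cons _ hcons) (by simpa using hlast) (by simpa using hV)
  rw [RelSeries.cons_length] at h
  lia

/-- Otherwise a chain of primes above the ideal of `a` could be prolonged below by that of `V`. -/
theorem IsIrredVar.torusVanishingIdeal_eq_of_trdegOver_eq_vdim [IsAlgClosed K] [Finite ι]
    {F : Subfield K} {V : Set (ι → Kˣ)} (hV : IsIrredVar K V) (hVF : IsClosedOver K F V)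
    {a : ι → Kˣ} (ha : a ∈ V)
    (hgen : trdegOver K F (Set.range fun i => (a i : K)) = vdim K V) :
    torusVanishingIdeal F {a} = torusVanishingIdeal F V := by
  have := hV.isPrime_torusVanishingIdeal F
  have hle : torusVanishingIdeal F V ≤ torusVanishingIdeal F {a} :=
    torusVanishingIdeal_anti (Set.singleton_subset_iff.mpr ha)
  by_contra hne
  exact (trdegOver_lt_vdim (hle.lt_of_ne' hne)
    hVF.torusZeroLocus_torusVanishingIdeal.subset).ne hgen

end Dimension

section Kummer

variable {K} {ι : Type}

theorem image_pow_mroot [IsAlgClosed K] {m : ℕ} (hm : m ≠ 0) (V : Set (ι → Kˣ)) :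
    (· ^ m) '' mroot K m V = V := by
  refine (Set.image_subset_iff.mpr subset_rfl).antisymm fun a ha => ?_
  have hroot (i) : ∃ u : Kˣ, u ^ m = a i := by
    obtain ⟨z, hz⟩ := IsAlgClosed.exists_pow_nat_eq (a i : K) (Nat.pos_of_ne_zero hm)
    have hz0 : z ≠ 0 := by
      rintro rfl
      exact (a i).ne_zero (by rw [← hz, zero_pow hm])
    exact ⟨Units.mk0 z hz0, Units.ext hz⟩
  choose b hb using hroot
  have hba : b ^ m = a := funext hb
  exact ⟨b, show b ^ m ∈ V from hba ▸ ha, hba⟩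

theorem comap_expand_torusVanishingIdeal {k : Type*} [Field k] [Algebra k K] (m : ℕ)
    (W : Set (ι → Kˣ)) :
    (torusVanishingIdeal k W).comap (expand m) = torusVanishingIdeal k ((· ^ m) '' W) := by
  ext p
  simp [mem_torusVanishingIdeal, aeval_expand, Pi.pow_def]

/-- The ideals of `a` and of `√[m]{V}` are comparable primes with the same contraction along the
integral map `expand m`, namely the ideal of `V`. -/
theorem KummerGeneric.torusVanishingIdeal_eq_of_pow_generic [IsAlgClosed K] [Finite ι]
    {F : Subfield K} {V : Set (ι → Kˣ)} (hV : KummerGeneric K V) (hVF : IsClosedOver K F V)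
    {m : ℕ} (hm : 1 ≤ m) {a : ι → Kˣ} (ha : a ^ m ∈ V)
    (hgen : trdegOver K F (Set.range fun i => ((a ^ m) i : K)) = vdim K V) :
    torusVanishingIdeal F {a} = torusVanishingIdeal F (mroot K m V) := by
  have hm0 : m ≠ 0 := Nat.one_le_iff_ne_zero.mp hm
  have := (hV.2 m hm).isPrime_torusVanishingIdeal F
  have hle : torusVanishingIdeal F (mroot K m V) ≤ torusVanishingIdeal F {a} :=
    torusVanishingIdeal_anti (Set.singleton_subset_iff.mpr ha)
  by_contra hne
  refine (comap_lt_comap_of_isIntegral (isIntegral_expand F ι hm0) (hle.lt_of_ne' hne)).ne ?_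
  change Ideal.comap (expand m) _ = Ideal.comap (expand m) _
  rw [comap_expand_torusVanishingIdeal, comap_expand_torusVanishingIdeal, image_pow_mroot hm0,
    Set.image_singleton, hV.1.torusVanishingIdeal_eq_of_trdegOver_eq_vdim hVF ha hgen]

end Kummer

section RootSystem

variable {K} {ι : Type}

/-- A compatible system of roots of `a 1`: `a (m * k)` is a `k`-th root of `a m`.
The value `a 0` is irrelevant. -/
def IsRootSystem {M : Type*} [Monoid M] (a : ℕ → M) : Prop :=
  ∀ m k : ℕ, 1 ≤ m → 1 ≤ k → a (m * k) ^ k = a m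

theorem IsRootSystem.pow_self {M : Type*} [Monoid M] {a : ℕ → M} (ha : IsRootSystem a) {m : ℕ}
    (hm : 1 ≤ m) : a m ^ m = a 1 := by
  simpa using ha 1 m le_rfl hm

theorem IsRootSystem.aeval_expand {k : Type*} [Field k] [Algebra k K] {a : ℕ → ι → Kˣ}
    (ha : IsRootSystem a) {m l : ℕ} (hm : 1 ≤ m) (hl : 1 ≤ l) (g : MvPolynomial ι k) :
    aeval (fun i => (a (m * l) i : K)) (expand l g) = aeval (fun i => (a m i : K)) g := by
  rw [MvPolynomial.aeval_expand, ← ha m l hm hl]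
  rfl

/-- The coordinates in `K` of all `a m`, `m ≥ 1`; over `F` they generate `rootsField K F a`. -/
def rootFamily (a : ℕ → ι → Kˣ) (p : {m : ℕ // 1 ≤ m} × ι) : K := a p.1 p.2

/-- A relation between roots of various levels is a relation at a single level, because `a m` is
a power of `a M` whenever `m ∣ M`. -/
theorem exists_aeval_eq_aeval_rootFamily {k : Type*} [Field k] [Algebra k K]
    (f : MvPolynomial ({m : ℕ // 1 ≤ m} × ι) k) :
    ∃ M, 1 ≤ M ∧ ∃ g : MvPolynomial ι k, ∀ a : ℕ → ι → Kˣ, IsRootSystem a →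
      aeval (fun i => (a M i : K)) g = aeval (rootFamily a) f := by
  induction f using MvPolynomial.induction_on with
  | C c => exact ⟨1, le_rfl, C c, fun a _ => by simp only [aeval_C]⟩
  | add p q hp hq =>
    obtain ⟨M, hM, g, hg⟩ := hp
    obtain ⟨N, hN, h, hh⟩ := hq
    refine ⟨M * N, Nat.mul_pos hM hN, expand N g + expand M h, fun a ha => ?_⟩
    rw [map_add, map_add, ha.aeval_expand hM hN, hg a ha, mul_comm, ha.aeval_expand hN hM, hh a ha]
  | mul_X p x hp =>
    obtain ⟨M, hM, g, hg⟩ := hp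
    obtain ⟨⟨m, hm⟩, i⟩ := x
    refine ⟨M * m, Nat.mul_pos hM hm, expand m g * expand M (X i), fun a ha => ?_⟩
    rw [map_mul, map_mul, ha.aeval_expand hM hm, hg a ha, mul_comm M, ha.aeval_expand hm hM]
    simp only [aeval_X, rootFamily]

theorem KummerGeneric.ker_aeval_rootFamily_eq [IsAlgClosed K] [Finite ι]
    {F : Subfield K} {V : Set (ι → Kˣ)} (hV : KummerGeneric K V) (hVF : IsClosedOver K F V)
    {a₁ a₂ : ℕ → ι → Kˣ} (h₁ : IsRootSystem a₁) (h₂ : IsRootSystem a₂)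
    (h₁V : a₁ 1 ∈ V) (h₂V : a₂ 1 ∈ V)
    (h₁gen : trdegOver K F (Set.range fun i => (a₁ 1 i : K)) = vdim K V)
    (h₂gen : trdegOver K F (Set.range fun i => (a₂ 1 i : K)) = vdim K V) :
    RingHom.ker (aeval (R := F) (rootFamily a₁)) =
      RingHom.ker (aeval (R := F) (rootFamily a₂)) := by
  have hideal {a : ℕ → ι → Kˣ} (ha : IsRootSystem a) (haV : a 1 ∈ V)
      (hgen : trdegOver K F (Set.range fun i => (a 1 i : K)) = vdim K V) {M : ℕ} (hM : 1 ≤ M) :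
      torusVanishingIdeal F {a M} = torusVanishingIdeal F (mroot K M V) :=
    hV.torusVanishingIdeal_eq_of_pow_generic hVF hM ((ha.pow_self hM).symm ▸ haV)
      ((ha.pow_self hM).symm ▸ hgen)
  ext f
  obtain ⟨M, hM, g, hg⟩ := exists_aeval_eq_aeval_rootFamily (K := K) f
  rw [RingHom.mem_ker, RingHom.mem_ker, ← hg a₁ h₁, ← hg a₂ h₂,
    ← mem_torusVanishingIdeal_singleton, ← mem_torusVanishingIdeal_singleton,
    hideal h₁ h₁V h₁gen hM, hideal h₂ h₂V h₂gen hM]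

theorem rootsField_eq_toSubfield_adjoin (F : Subfield K) {n : ℕ} (a : ℕ → Fin n → Kˣ) :
    rootsField K F a = (IntermediateField.adjoin F (Set.range (rootFamily a))).toSubfield := by
  have hF : Set.range (algebraMap F K) = F := Subtype.range_coe
  have hroots : ⋃ m ∈ {m : ℕ | 1 ≤ m}, Set.range (fun j => (a m j : K)) =
      Set.range (rootFamily a) := by
    ext x
    simp [rootFamily]
  rw [rootsField, hroots, ← hF]
  rfl

end RootSystem

variable {K} in
theorem kummerGeneric_roots_conjugate_general [IsAlgClosed K] {F : Subfield K} {n : ℕ}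
    {V : Set (Fin n → Kˣ)} (hVF : IsClosedOver K F V) (hV : KummerGeneric K V)
    {a₁ a₂ : ℕ → Fin n → Kˣ} (h₁ : IsRootSystem a₁) (h₂ : IsRootSystem a₂)
    (h₁V : a₁ 1 ∈ V) (h₂V : a₂ 1 ∈ V)
    (h₁gen : trdegOver K F (Set.range fun i => (a₁ 1 i : K)) = vdim K V)
    (h₂gen : trdegOver K F (Set.range fun i => (a₂ 1 i : K)) = vdim K V) :
    ∃ σ : rootsField K F a₁ ≃+* rootsField K F a₂,
      (∀ x : rootsField K F a₁, (x : K) ∈ F → (σ x : K) = x) ∧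
      ∀ m, 1 ≤ m → ∀ j, ∀ x : rootsField K F a₁, (x : K) = a₁ m j → (σ x : K) = a₂ m j := by
  obtain ⟨σ, hσ⟩ := exists_algEquiv_adjoin_range
    (hV.ker_aeval_rootFamily_eq hVF h₁ h₂ h₁V h₂V h₁gen h₂gen)
  rw [rootsField_eq_toSubfield_adjoin, rootsField_eq_toSubfield_adjoin]
  refine ⟨σ.toRingEquiv, fun x hx => ?_, fun m hm j x hx => hσ (⟨m, hm⟩, j) x hx⟩
  exact congrArg Subtype.val (σ.commutes ⟨x, hx⟩)

end

/-- Two generic points of a Kummer generic variety over an algebraically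
closed subfield `F`, together with compatible systems of roots, are conjugate over `F`. -/
theorem kummerGeneric_roots_conjugate
    (K : Type) [Field K] [IsAlgClosed K] [CharZero K]
    (F : Subfield K) (hF : IsAlgClosed ↥F)
    {n : ℕ} (V : Set (Fin n → Kˣ)) (hVF : IsClosedOver K (↑F) V)
    (hVkg : KummerGeneric K V)
    (a₁ a₂ : ℕ → Fin n → Kˣ)
    (h₁V : a₁ 1 ∈ V) (h₂V : a₂ 1 ∈ V)
    (h₁gen : trdegOver K F (Set.range fun j => ((a₁ 1 j : Kˣ) : K)) = vdim K V)
    (h₂gen : trdegOver K F (Set.range fun j => ((a₂ 1 j : Kˣ) : K)) = vdim K V)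
    (h₁root : ∀ m k : ℕ, 1 ≤ m → 1 ≤ k → (fun j => a₁ (m * k) j ^ k) = a₁ m)
    (h₂root : ∀ m k : ℕ, 1 ≤ m → 1 ≤ k → (fun j => a₂ (m * k) j ^ k) = a₂ m) :
    ∃ σ : ↥(rootsField K F a₁) ≃+* ↥(rootsField K F a₂),
      (∀ x : ↥(rootsField K F a₁), (x : K) ∈ F → ((σ x : ↥(rootsField K F a₂)) : K) = (x : K)) ∧
      ∀ m : ℕ, 1 ≤ m → ∀ j : Fin n, ∀ x : ↥(rootsField K F a₁),
        (x : K) = ((a₁ m j : Kˣ) : K) → ((σ x : ↥(rootsField K F a₂)) : K) = ((a₂ m j : Kˣ) : K) :=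
  kummerGeneric_roots_conjugate_general hVF hVkg h₁root h₂root h₁V h₂V h₁gen h₂gen

end BadFields
end
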